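/- A function f ∈ L^1(-1,1) belongs to LlogL(-1,1) if and only if T(fχ_A) ∈ L^1(-1,1) for every Borel set A ⊆ (-1,1). Consequently, the optimal domain [T, L^1] := {f ∈ L^1(-1,1) : T(h) ∈ L^1(-1,1) for every measurable h with |h| ≤ |f|} equals LlogL(-1,1), and T : LlogL(-1,1) → L^1(-1,1) admits no continuous linear extension to any strictly larger Banach function space of measurable functions on (-1,1). -/

import Mathlib

open MeasureTheory Set Filter

noncomputable section

/-- Lebesgue measure restricted to the interval `(-1, 1)`. -/
def μI : Measure ℝ := volume.restrict (Set.Ioo (-1 : ℝ) 1)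

/-- The finite Hilbert transform: the principal-value limit
`T(f)(t) = lim_{ε→0⁺} (1/π) ∫_{x∈(-1,1), |x-t|≥ε} f(x)/(x-t) dx`. -/
def FHT (f : ℝ → ℂ) (t : ℝ) : ℂ :=
  limUnder (nhdsWithin (0 : ℝ) (Set.Ioi 0)) fun ε : ℝ =>
    (Real.pi : ℂ)⁻¹ *
      ∫ x in {x : ℝ | x ∈ Set.Ioo (-1 : ℝ) 1 ∧ ε ≤ |x - t|}, f x / ((x : ℂ) - (t : ℂ))

/-- The operator `T̂(g)(x) = -(1-x²)^{-1/2} T(t ↦ √(1-t²) g(t))(x)`. -/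
def hatT (g : ℝ → ℂ) (x : ℝ) : ℂ :=
  -((Real.sqrt (1 - x ^ 2) : ℂ))⁻¹ * FHT (fun t => (Real.sqrt (1 - t ^ 2) : ℂ) * g t) x

/-- Membership in the Zygmund space `L log L(-1,1)`:
`f` is a.e. measurable on `(-1,1)` and `∫ |f| log⁺|f| < ∞`. -/
def MemLlogL (f : ℝ → ℂ) : Prop :=
  AEStronglyMeasurable f μI ∧
    IntegrableOn (fun x => ‖f x‖ * max (Real.log ‖f x‖) 0) (Set.Ioo (-1 : ℝ) 1)

/-- The distribution function `λ ↦ |{x ∈ (-1,1) : |f(x)| > λ}|`. -/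
def distFun (f : ℝ → ℂ) (lam : ℝ) : ℝ :=
  (volume {x : ℝ | x ∈ Set.Ioo (-1 : ℝ) 1 ∧ lam < ‖f x‖}).toReal

/-- The decreasing rearrangement `f*` of `f`, a function on `(0,2)`. -/
def decRearr (f : ℝ → ℂ) (t : ℝ) : ℝ :=
  sInf {lam : ℝ | 0 ≤ lam ∧ distFun f lam ≤ t}

/-- The `L log L` norm `‖f‖ = ∫_0^2 f*(t) log(2e/t) dt`. -/
def llogLNorm (f : ℝ → ℂ) : ℝ :=
  ∫ t in Set.Ioo (0 : ℝ) 2, decRearr f t * Real.log (2 * Real.exp 1 / t)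

/-- The `L(log L)^α` norm `∫_0^2 f*(t) log^α(2e/t) dt` (for `α = 0` this is the `L¹` norm). -/
def zygNorm (α : ℝ) (f : ℝ → ℂ) : ℝ :=
  ∫ t in Set.Ioo (0 : ℝ) 2, decRearr f t * Real.log (2 * Real.exp 1 / t) ^ α

/-- Membership in the Zygmund space `L(log L)^α(-1,1)`. -/
def MemZyg (α : ℝ) (f : ℝ → ℂ) : Prop :=
  AEStronglyMeasurable f μI ∧
    IntegrableOn (fun t => decRearr f t * Real.log (2 * Real.exp 1 / t) ^ α)
      (Set.Ioo (0 : ℝ) 2)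

/-- Membership in `L(log L)²(-1,1)`: `∫ |f| (log(2+|f|))² < ∞`. -/
def MemLlogL2 (f : ℝ → ℂ) : Prop :=
  AEStronglyMeasurable f μI ∧
    IntegrableOn (fun x => ‖f x‖ * Real.log (2 + ‖f x‖) ^ 2) (Set.Ioo (-1 : ℝ) 1)

/-- The constant `c(β,γ) = max{1/(1-β), 1/(1-γ), 1/(β+γ-1)}`. -/
def cBG (β γ : ℝ) : ℝ := max (max (1 / (1 - β)) (1 / (1 - γ))) (1 / (β + γ - 1))

/-- A Banach function space (of measurable functions on `(-1,1)`), given by a membership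
predicate and a norm: a normed function lattice with the ideal property and the Fatou
property. -/
structure BanachFunctionSpace where
  Mem : (ℝ → ℂ) → Prop
  nrm : (ℝ → ℂ) → ℝ
  mem_meas : ∀ f, Mem f → AEStronglyMeasurable f μI
  nrm_nonneg : ∀ f, 0 ≤ nrm f
  nrm_eq_zero : ∀ f, Mem f → (nrm f = 0 ↔ f =ᵐ[μI] 0)
  add_mem : ∀ f g, Mem f → Mem g → Mem (f + g)
  smul_mem : ∀ (c : ℂ) (f : ℝ → ℂ), Mem f → Mem (c • f)
  nrm_add_le : ∀ f g, Mem f → Mem g → nrm (f + g) ≤ nrm f + nrm g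
  nrm_smul : ∀ (c : ℂ) (f : ℝ → ℂ), Mem f → nrm (c • f) = ‖c‖ * nrm f
  /-- the ideal property -/
  ideal : ∀ f g, Mem f → AEStronglyMeasurable g μI →
    (∀ᵐ x ∂μI, ‖g x‖ ≤ ‖f x‖) → Mem g ∧ nrm g ≤ nrm f
  /-- the Fatou property -/
  fatou : ∀ (F : ℕ → ℝ → ℂ) (f : ℝ → ℂ) (C : ℝ),
    AEStronglyMeasurable f μI →
    (∀ n, Mem (F n)) → (∀ n, nrm (F n) ≤ C) →
    (∀ᵐ x ∂μI, Monotone fun n => ‖F n x‖) →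
    (∀ᵐ x ∂μI, Tendsto (fun n => ‖F n x‖) atTop (nhds ‖f x‖)) →
    Mem f ∧ nrm f ≤ C

/-!
For a nonnegative density `f` on the line, `W = 1 + (πi)⁻¹ ∫ f(x)/(x - z) dx` maps the upper
half-plane into `{1 ≤ Re}`, and its boundary values have real part `1 + f` and imaginary part `-Hf`,
with `H` the Hilbert transform. With respect to the Cauchy distribution, the harmonic measure of the
half-plane at `i`, `W` and `W log W` have the mean value property, up to a holomorphic truncation of
`W`. Since `Re (w log w) = Re w log |w| - Im w arg w` with `|arg w| ≤ π / 2`, this compares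
`∫ (1 + f) log (1 + f)` with `∫ |Hf|`, and in both directions:

* pointwise, `|Im w|` is at most a multiple of `Re w log Re w + 2 Re w - Re (w log w)`, which gives
  Zygmund's theorem that `T` maps `L log L` into `L¹`;
* conversely `∫ (1 + f) log (1 + f)` is bounded in terms of the integral of `|Hf|` over the whole
  line, and `(-1, 1)` suffices if `f` lives on one half of it: on the other half there is no
  cancellation, so `Hf` controls the mass `∫ f`, and beyond the support `Hf` has a constant sign, so
  the mean value property of `Im W` controls it there.

The sets `A` cut a general `f` into positive components supported on one half of `(-1, 1)`. For a
Banach function space, the ideal property lets the converse be applied to bounded truncations of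
`f`, and its bound is uniform in the truncation.
-/

section

open Complex (I)
open ProbabilityTheory (cauchyMeasure cauchyPDF cauchyPDFReal)
open UpperHalfPlane (upperHalfPlaneSet isOpen_upperHalfPlaneSet)
open scoped Real Topology NNReal ENNReal

local notation "ω" => cauchyMeasure 0 1

/-! ### The Cauchy distribution -/

section CauchyMeasure

variable {E : Type*} [NormedAddCommGroup E] [NormedSpace ℝ E]

lemma integral_cauchyMeasure (x₀ : ℝ) {γ : ℝ≥0} (hγ : γ ≠ 0) (h : ℝ → E) :
    ∫ x, h x ∂cauchyMeasure x₀ γ = ∫ x, cauchyPDFReal x₀ γ x • h x := by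
  rw [ProbabilityTheory.cauchyMeasure_of_scale_ne_zero x₀ hγ,
    integral_withDensity_eq_integral_toReal_smul (f := cauchyPDF x₀ γ) (by fun_prop)
      (ae_of_all _ fun _ => ENNReal.ofReal_lt_top)]
  exact integral_congr_ae (ae_of_all _ fun x => by
    simp only [cauchyPDF, ENNReal.toReal_ofReal (ProbabilityTheory.cauchyPDF_pos x₀ hγ x).le])

lemma integral_standardCauchy (h : ℝ → E) :
    ∫ x, h x ∂ω = ∫ x, (π⁻¹ * (1 + x ^ 2)⁻¹) • h x := by
  rw [integral_cauchyMeasure 0 one_ne_zero]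
  simp [cauchyPDFReal, add_comm]

lemma cauchyMeasure_absolutelyContinuous (x₀ : ℝ) {γ : ℝ≥0} (hγ : γ ≠ 0) :
    cauchyMeasure x₀ γ ≪ volume := by
  rw [ProbabilityTheory.cauchyMeasure_of_scale_ne_zero x₀ hγ]
  exact withDensity_absolutelyContinuous _ _

lemma absolutelyContinuous_cauchyMeasure (x₀ : ℝ) {γ : ℝ≥0} (hγ : γ ≠ 0) :
    volume ≪ cauchyMeasure x₀ γ := by
  rw [ProbabilityTheory.cauchyMeasure_of_scale_ne_zero x₀ hγ]
  exact withDensity_absolutelyContinuous' (by fun_prop) (ae_of_all _ fun x =>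
    (ENNReal.ofReal_pos.2 (ProbabilityTheory.cauchyPDF_pos x₀ hγ x)).ne')

lemma ae_standardCauchy_iff {p : ℝ → Prop} : (∀ᵐ x ∂ω, p x) ↔ ∀ᵐ x, p x :=
  ⟨fun h => (absolutelyContinuous_cauchyMeasure 0 one_ne_zero).ae_le h,
    fun h => (cauchyMeasure_absolutelyContinuous 0 one_ne_zero).ae_le h⟩

lemma cauchyPDFReal_le (x₀ : ℝ) (γ : ℝ≥0) (x : ℝ) : cauchyPDFReal x₀ γ x ≤ π⁻¹ * (γ : ℝ)⁻¹ := by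
  rw [ProbabilityTheory.cauchyPDFReal_def']
  exact mul_le_of_le_one_right (by positivity)
    (inv_le_one_of_one_le₀ (le_add_of_nonneg_right (sq_nonneg _)))

lemma cauchyMeasure_le_smul_volume (x₀ : ℝ) {γ : ℝ≥0} (hγ : γ ≠ 0) :
    cauchyMeasure x₀ γ ≤ ENNReal.ofReal (π⁻¹ * (γ : ℝ)⁻¹) • volume := by
  rw [ProbabilityTheory.cauchyMeasure_of_scale_ne_zero x₀ hγ, ← withDensity_const]
  exact withDensity_mono (ae_of_all _ fun x => ENNReal.ofReal_le_ofReal (cauchyPDFReal_le x₀ γ x))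

lemma integrable_cauchyMeasure {F : Type*} [NormedAddCommGroup F] {h : ℝ → F}
    (hh : Integrable h) (x₀ : ℝ) {γ : ℝ≥0} (hγ : γ ≠ 0) :
    Integrable h (cauchyMeasure x₀ γ) :=
  (hh.smul_measure ENNReal.ofReal_ne_top).mono_measure (cauchyMeasure_le_smul_volume x₀ hγ)

lemma standardCauchy_le_volume : ω ≤ volume := by
  refine (cauchyMeasure_le_smul_volume 0 one_ne_zero).trans (Measure.le_iff'.2 fun s => ?_)
  refine mul_le_of_le_one_left zero_le (ENNReal.ofReal_le_one.2 ?_)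
  rw [NNReal.coe_one, inv_one, mul_one]
  exact inv_le_one_of_one_le₀ (by linarith [Real.pi_gt_three])

lemma volume_restrict_Ioo_le_smul_standardCauchy :
    volume.restrict (Ioo (-1) 1) ≤ ENNReal.ofReal (2 * π) • ω := by
  rw [ProbabilityTheory.cauchyMeasure_of_scale_ne_zero 0 one_ne_zero,
    ← withDensity_smul _ (by fun_prop), ← withDensity_indicator_one measurableSet_Ioo]
  refine withDensity_mono (ae_of_all _ fun x => ?_)
  refine indicator_apply_le fun hx => ?_
  rw [Pi.one_apply, Pi.smul_apply, smul_eq_mul, cauchyPDF,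
    ← ENNReal.ofReal_mul (by positivity), ENNReal.one_le_ofReal, cauchyPDFReal]
  have hx2 : (x - 0) ^ 2 + ((1 : ℝ≥0) : ℝ) ^ 2 ≤ 2 := by
    norm_num
    nlinarith [hx.1, hx.2]
  calc (1 : ℝ) = 2 * π * (π⁻¹ * ((1 : ℝ≥0) : ℝ) * 2⁻¹) := by
        rw [NNReal.coe_one]
        field_simp
    _ ≤ _ := by gcongr

lemma setIntegral_Ioo_le_integral_standardCauchy {h : ℝ → ℝ} (hh : Integrable h ω)
    (h0 : 0 ≤ᵐ[ω] h) : ∫ x in Ioo (-1) 1, h x ≤ 2 * π * ∫ x, h x ∂ω := by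
  calc ∫ x in Ioo (-1) 1, h x ≤ ∫ x, h x ∂(ENNReal.ofReal (2 * π) • ω) :=
        integral_mono_measure volume_restrict_Ioo_le_smul_standardCauchy
          (Measure.ae_smul_measure h0 _) (hh.smul_measure ENNReal.ofReal_ne_top)
    _ = 2 * π * ∫ x, h x ∂ω := by
        rw [integral_smul_measure, ENNReal.toReal_ofReal (by positivity), smul_eq_mul]

lemma integrableOn_Ioo_of_integrable_standardCauchy {F : Type*} [NormedAddCommGroup F] {h : ℝ → F}
    (hh : Integrable h ω) :
    IntegrableOn h (Ioo (-1) 1) :=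
  (hh.smul_measure ENNReal.ofReal_ne_top).mono_measure volume_restrict_Ioo_le_smul_standardCauchy

end CauchyMeasure

/-! ### Mean values over horizontal lines -/

section Contour

variable {F : Type*} [NormedAddCommGroup F] [NormedSpace ℂ F]

lemma intervalIntegral_eq_other_sides {K : ℂ → F} {R : ℝ}
    (hK : ∀ z : ℂ, 0 ≤ z.im → DifferentiableAt ℂ K z) (hR : 0 < R) :
    ∫ x in (-R)..R, K x = (∫ x in (-R)..R, K (x + R * I))
      - I • (∫ y in (0 : ℝ)..R, K (R + y * I)) + I • ∫ y in (0 : ℝ)..R, K (-R + y * I) := by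
  have hrect := Complex.integral_boundary_rect_eq_zero_of_differentiableOn K (-R : ℂ) (R + R * I)
    fun z hz => (hK z (by
      have : z.im ∈ uIcc 0 R := by simpa using hz.2
      exact (uIcc_of_le hR.le ▸ this).1)).differentiableWithinAt
  simp only [Complex.neg_im, Complex.ofReal_im, neg_zero, Complex.ofReal_zero, zero_mul, add_zero,
    Complex.neg_re, Complex.ofReal_re, Complex.add_re, Complex.mul_re, Complex.I_re, mul_zero,
    Complex.I_im, mul_one, sub_self, Complex.add_im, Complex.mul_im, zero_add,
    Complex.ofReal_neg] at hrect
  rw [← sub_eq_zero, ← hrect]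
  abel

lemma integral_eq_zero_of_differentiableAt_of_norm_le {K : ℂ → F} {C R₀ : ℝ}
    (hK : ∀ z : ℂ, 0 ≤ z.im → DifferentiableAt ℂ K z)
    (hdecay : ∀ z : ℂ, 0 ≤ z.im → R₀ ≤ ‖z‖ → ‖K z‖ ≤ C / ‖z‖ ^ 2)
    (hint : Integrable fun x : ℝ => K x) : ∫ x : ℝ, K x = 0 := by
  have hlim : Tendsto (fun R : ℝ => |C| / R ^ 2 * (2 * R) + |C| / R ^ 2 * R + |C| / R ^ 2 * R)
      atTop (𝓝 0) := by
    have h := (tendsto_inv_atTop_zero (𝕜 := ℝ)).const_mul (4 * |C|)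
    rw [mul_zero] at h
    refine h.congr' ?_
    filter_upwards [eventually_gt_atTop 0] with R hR
    field_simp
    ring
  refine tendsto_nhds_unique
    (intervalIntegral_tendsto_integral hint tendsto_neg_atTop_atBot tendsto_id)
    (squeeze_zero_norm' ?_ hlim)
  filter_upwards [eventually_gt_atTop 0, eventually_ge_atTop R₀] with R hR hR₀
  have hside : ∀ {a b : ℝ} (c : ℝ → ℂ), a ≤ b →
      (∀ t ∈ Ioc a b, 0 ≤ (c t).im ∧ R ≤ ‖c t‖) →
      ‖∫ t in a..b, K (c t)‖ ≤ |C| / R ^ 2 * (b - a) := fun {a b} c hab hc => by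
    rw [← abs_of_nonneg (sub_nonneg.2 hab)]
    refine intervalIntegral.norm_integral_le_of_norm_le_const fun t ht => ?_
    obtain ⟨him, hnorm⟩ := hc t (by rwa [uIoc_of_le hab] at ht)
    calc ‖K (c t)‖ ≤ C / ‖c t‖ ^ 2 := hdecay _ him (hR₀.trans hnorm)
      _ ≤ |C| / R ^ 2 := by gcongr; exact le_abs_self C
  have hnorm_re : ∀ {z : ℂ}, |z.re| = R → R ≤ ‖z‖ := fun h => h ▸ Complex.abs_re_le_norm _
  have hnorm_im : ∀ {z : ℂ}, z.im = R → R ≤ ‖z‖ := fun h => h ▸ Complex.im_le_norm _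
  have htop := hside (fun x => x + R * I) (neg_le_self hR.le) fun t _ =>
    ⟨by simpa using hR.le, hnorm_im (by simp)⟩
  have hright := hside (fun y => R + y * I) hR.le fun t ht =>
    ⟨by simpa using ht.1.le, hnorm_re (by simpa using hR.le)⟩
  have hleft := hside (fun y => -R + y * I) hR.le fun t ht =>
    ⟨by simpa using ht.1.le, hnorm_re (by simpa using hR.le)⟩
  rw [id, intervalIntegral_eq_other_sides hK hR]
  refine (norm_add_le _ _).trans (add_le_add ((norm_sub_le _ _).trans (add_le_add ?_ ?_)) ?_)
  · exact htop.trans_eq (by ring)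
  · rw [norm_smul, Complex.norm_I, one_mul]
    exact hright.trans_eq (by ring)
  · rw [norm_smul, Complex.norm_I, one_mul]
    exact hleft.trans_eq (by ring)

lemma dslope_div_add_I (g : ℂ → ℂ) {z : ℂ} (hz : z ≠ I) :
    dslope g I z / (z + I) = (g z - g I) * (1 + z ^ 2)⁻¹ := by
  rw [dslope_of_ne _ hz, slope_def_field, div_div, div_eq_mul_inv]
  congr 2
  linear_combination -Complex.I_sq

lemma integral_sub_mul_inv_one_add_sq_eq_zero {g : ℂ → ℂ} {η B : ℝ} (hη : 0 < η)
    (hg : DifferentiableOn ℂ g {z | -η < z.im}) (hB : ∀ z : ℂ, 0 ≤ z.im → ‖g z‖ ≤ B) :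
    ∫ x : ℝ, (g x - g I) * (1 + (x : ℂ) ^ 2)⁻¹ = 0 := by
  have hopen : IsOpen {z : ℂ | -η < z.im} := isOpen_lt continuous_const Complex.continuous_im
  have hmem : ∀ {z : ℂ}, 0 ≤ z.im → {z : ℂ | -η < z.im} ∈ 𝓝 z := fun hz =>
    hopen.mem_nhds (lt_of_lt_of_le (neg_lt_zero.2 hη) hz)
  have hneI : ∀ {z : ℂ}, 0 ≤ z.im → z + I ≠ 0 := fun {z} hz h => by
    have := congrArg Complex.im h
    simp only [Complex.add_im, Complex.I_im, Complex.zero_im] at this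
    linarith
  have hgsub : ∀ {z : ℂ}, 0 ≤ z.im → ‖g z - g I‖ ≤ 2 * B := fun {z} hz =>
    (norm_sub_le _ _).trans (by linarith [hB z hz, hB I (by simp)])
  have hne : ∀ x : ℝ, (x : ℂ) ≠ I := fun x h => by simpa using congrArg Complex.im h
  have hcont : Continuous fun x : ℝ => g x := continuous_iff_continuousAt.2 fun x =>
    ((hg.differentiableAt (hmem (by simp))).continuousAt).comp
      Complex.continuous_ofReal.continuousAt
  simp_rw [← fun x : ℝ => dslope_div_add_I g (hne x)]
  refine integral_eq_zero_of_differentiableAt_of_norm_le (K := fun z => dslope g I z / (z + I))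
    (C := 4 * B) (R₀ := 2) (fun z hz => ?_) (fun z hz hz2 => ?_) ?_
  · exact (((Complex.differentiableOn_dslope (hmem (by simp))).2 hg).differentiableAt
      (hmem hz)).div (by fun_prop) (hneI hz)
  · rw [dslope_div_add_I g (by rintro rfl; norm_num at hz2), norm_mul, norm_inv, ← div_eq_mul_inv]
    have hB0 : 0 ≤ 2 * B := (norm_nonneg _).trans (hgsub hz)
    have hsq : ‖z‖ ^ 2 / 2 ≤ ‖1 + z ^ 2‖ := by
      have h := norm_sub_le (1 + z ^ 2) 1
      rw [add_sub_cancel_left, norm_pow, norm_one] at h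
      nlinarith
    calc ‖g z - g I‖ / ‖1 + z ^ 2‖ ≤ 2 * B / (‖z‖ ^ 2 / 2) := by gcongr; exact hgsub hz
      _ = 4 * B / ‖z‖ ^ 2 := by field_simp; ring
  · simp_rw [dslope_div_add_I g (hne _)]
    refine Integrable.bdd_mul (c := 2 * B) ?_ (hcont.sub continuous_const).aestronglyMeasurable
      (ae_of_all _ fun x => hgsub (by simp))
    exact_mod_cast integrable_inv_one_add_sq.ofReal

end Contour

lemma continuous_comp_line {H : ℂ → ℂ} (hH : DifferentiableOn ℂ H upperHalfPlaneSet) {η : ℝ}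
    (hη : 0 < η) : Continuous fun x : ℝ => H (x + η * I) :=
  continuous_iff_continuousAt.2 fun x =>
    ContinuousAt.comp (g := H) (f := fun x : ℝ => (x : ℂ) + η * I)
      (hH.differentiableAt (isOpen_upperHalfPlaneSet.mem_nhds (by simpa using hη))).continuousAt
      (by fun_prop)

lemma integrable_line_standardCauchy {H : ℂ → ℂ} {η B : ℝ} (hη : 0 < η)
    (hH : DifferentiableOn ℂ H upperHalfPlaneSet) (hB : ∀ z : ℂ, η ≤ z.im → ‖H z‖ ≤ B) :
    Integrable (fun x : ℝ => H (x + η * I)) ω :=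
  .of_bound (continuous_comp_line hH hη).aestronglyMeasurable B
    (ae_of_all _ fun x => hB _ (by simp))

lemma integral_line_standardCauchy {H : ℂ → ℂ} {η B : ℝ} (hη : 0 < η)
    (hH : DifferentiableOn ℂ H upperHalfPlaneSet) (hB : ∀ z : ℂ, η ≤ z.im → ‖H z‖ ≤ B) :
    ∫ x : ℝ, H (x + η * I) ∂ω = H ((1 + η) * I) := by
  have hzero := integral_sub_mul_inv_one_add_sq_eq_zero (g := fun z => H (z + η * I)) (B := B) hη
    (hH.comp (by fun_prop) fun z hz => by simpa [← neg_lt_iff_pos_add] using hz)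
    fun z hz => hB _ (by simpa using hz)
  have hint : Integrable (fun x : ℝ => H (x + η * I)) ω := integrable_line_standardCauchy hη hH hB
  have hsub : ∫ x : ℝ, (H (x + η * I) - H (I + η * I)) ∂ω = 0 := by
    rw [integral_standardCauchy, ← mul_zero (π⁻¹ : ℂ), ← hzero, ← integral_const_mul]
    exact integral_congr_ae (ae_of_all _ fun x => by
      simp only [Complex.real_smul, Complex.ofReal_mul, Complex.ofReal_inv, Complex.ofReal_add,
        Complex.ofReal_one, Complex.ofReal_pow]
      ring)
  rw [integral_sub hint (integrable_const _), integral_const, probReal_univ, one_smul,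
    sub_eq_zero] at hsub
  rw [hsub, one_add_mul]

lemma integral_dilated_line_standardCauchy {H : ℂ → ℂ} {η B : ℝ} (hη : 0 < η)
    (hH : DifferentiableOn ℂ H upperHalfPlaneSet) (hB : ∀ z : ℂ, η ≤ z.im → ‖H z‖ ≤ B)
    (x : ℝ) {y : ℝ} (hy : 0 < y) :
    ∫ s : ℝ, H (x + y * s + η * I) ∂ω = H (x + (y + η) * I) := by
  have h := integral_line_standardCauchy (H := fun z => H (x + y * z)) (η := η / y) (B := B)
    (by positivity)
    (hH.comp (by fun_prop) fun z hz => by simpa [upperHalfPlaneSet, hy] using hz)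
    fun z hz => hB _ (by simpa [mul_comm] using (div_le_iff₀ hy).1 hz)
  have hy' : (y : ℂ) ≠ 0 := mod_cast hy.ne'
  convert h using 2
  · ext s
    congr 1
    push_cast
    field_simp
    ring
  · push_cast
    field_simp

/-! ### Fatou's theorem for bounded holomorphic functions -/

section Fatou

variable {E : Type*} [NormedAddCommGroup E] [NormedSpace ℝ E]

/-- Minus the derivative of the density of the standard Cauchy distribution. -/
def cauchyDerivKernel (s : ℝ) : ℝ := π⁻¹ * (2 * s / (1 + s ^ 2) ^ 2)

lemma continuous_cauchyDerivKernel : Continuous cauchyDerivKernel :=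
  continuous_const.mul <| Continuous.div (by fun_prop) (by fun_prop) fun s => by positivity

lemma hasDerivAt_cauchyDensity (s : ℝ) :
    HasDerivAt (fun s : ℝ => π⁻¹ * (1 + s ^ 2)⁻¹) (-cauchyDerivKernel s) s := by
  have h : HasDerivAt (fun s : ℝ => 1 + s ^ 2) (2 * s) s := by
    simpa using (hasDerivAt_pow 2 s).const_add 1
  refine ((h.inv (by positivity)).const_mul π⁻¹).congr_deriv ?_
  rw [cauchyDerivKernel]
  ring

lemma integrable_norm_cauchyDerivKernel_mul_abs :
    Integrable fun s : ℝ => ‖cauchyDerivKernel s‖ * |s| := by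
  refine (integrable_inv_one_add_sq.const_mul 2).mono'
    (continuous_cauchyDerivKernel.norm.mul continuous_abs).aestronglyMeasurable
    (ae_of_all _ fun s => ?_)
  rw [← Real.norm_eq_abs s, ← norm_mul, norm_norm]
  have hπ : π⁻¹ ≤ 1 := inv_le_one_of_one_le₀ (by linarith [Real.pi_gt_three])
  have hkernel : cauchyDerivKernel s * s = π⁻¹ * (2 * (s ^ 2 / (1 + s ^ 2) ^ 2)) := by
    rw [cauchyDerivKernel]
    ring
  rw [hkernel, Real.norm_of_nonneg (by positivity)]
  calc π⁻¹ * (2 * (s ^ 2 / (1 + s ^ 2) ^ 2))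
      ≤ 1 * (2 * ((1 + s ^ 2) / (1 + s ^ 2) ^ 2)) := by gcongr; linarith
    _ = 2 * (1 + s ^ 2)⁻¹ := by field_simp

lemma tendsto_integral_cauchyDerivKernel_smul {ι : Type*} {l : Filter ι} [l.IsCountablyGenerated]
    {Ψ : ι → ℝ → E} {Ψ₀ : ℝ → E} {C : ℝ} (hmeas : ∀ᶠ i in l, Continuous (Ψ i))
    (hbound : ∀ᶠ i in l, ∀ s, ‖Ψ i s‖ ≤ C * |s|)
    (hlim : ∀ s, Tendsto (fun i => Ψ i s) l (𝓝 (Ψ₀ s))) :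
    Tendsto (fun i => ∫ s, cauchyDerivKernel s • Ψ i s) l
      (𝓝 (∫ s, cauchyDerivKernel s • Ψ₀ s)) := by
  refine tendsto_integral_filter_of_dominated_convergence
    (fun s => C * (‖cauchyDerivKernel s‖ * |s|)) ?_ ?_
    (integrable_norm_cauchyDerivKernel_mul_abs.const_mul C)
    (ae_of_all _ fun s => (hlim s).const_smul _)
  · filter_upwards [hmeas] with i hi
    exact (continuous_cauchyDerivKernel.smul hi).aestronglyMeasurable
  · filter_upwards [hbound] with i hi
    refine ae_of_all _ fun s => ?_
    rw [norm_smul]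
    calc ‖cauchyDerivKernel s‖ * ‖Ψ i s‖ ≤ ‖cauchyDerivKernel s‖ * (C * |s|) := by
          gcongr; exact hi s
      _ = C * (‖cauchyDerivKernel s‖ * |s|) := by ring

lemma norm_inv_smul_dilation_sub_le {Φ : ℝ → E} {K : ℝ≥0} (hΦ : LipschitzWith K Φ) (x : ℝ)
    {y : ℝ} (hy : 0 < y) (s : ℝ) : ‖y⁻¹ • (Φ (x + y * s) - Φ x)‖ ≤ K * |s| := by
  rw [norm_smul, norm_inv, Real.norm_of_nonneg hy.le, inv_mul_le_iff₀ hy]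
  refine (hΦ.norm_sub_le _ _).trans_eq ?_
  rw [add_sub_cancel_left, norm_mul, Real.norm_of_nonneg hy.le, Real.norm_eq_abs]
  ring

lemma continuous_inv_smul_dilation_sub {Φ : ℝ → E} (hΦ : Continuous Φ) (x y : ℝ) :
    Continuous fun s : ℝ => y⁻¹ • (Φ (x + y * s) - Φ x) := by
  fun_prop

lemma tendsto_cauchyDensity_smul_cocompact {v : ℝ → E} {C : ℝ} (hv : ∀ s, ‖v s‖ ≤ C * |s|) :
    Tendsto (fun s : ℝ => (π⁻¹ * (1 + s ^ 2)⁻¹) • v s) (cocompact ℝ) (𝓝 0) := by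
  have hlim : Tendsto (fun s : ℝ => π⁻¹ * C * |s|⁻¹) (cocompact ℝ) (𝓝 0) := by
    have h : Tendsto (fun s : ℝ => |s|) (cocompact ℝ) atTop := tendsto_norm_cocompact_atTop
    simpa using h.inv_tendsto_atTop.const_mul (π⁻¹ * C)
  have hC : 0 ≤ C := by simpa using (norm_nonneg _).trans (hv 1)
  refine squeeze_zero_norm (fun s => ?_) hlim
  have hs : (1 + s ^ 2)⁻¹ * |s| ≤ |s|⁻¹ := by
    rcases eq_or_ne s 0 with rfl | hs
    · simp
    · have : 0 < |s| := abs_pos.2 hs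
      rw [inv_mul_le_iff₀ (by positivity), ← sq_abs s, le_mul_inv_iff₀ this]
      nlinarith
  rw [norm_smul, Real.norm_of_nonneg (by positivity)]
  calc π⁻¹ * (1 + s ^ 2)⁻¹ * ‖v s‖ ≤ π⁻¹ * (1 + s ^ 2)⁻¹ * (C * |s|) := by gcongr; exact hv s
    _ = π⁻¹ * C * ((1 + s ^ 2)⁻¹ * |s|) := by ring
    _ ≤ π⁻¹ * C * |s|⁻¹ := by gcongr

lemma integral_dilation_standardCauchy [CompleteSpace E] {Φ φ : ℝ → E} {K : ℝ≥0}
    (hΦ : LipschitzWith K Φ) (hderiv : ∀ t, HasDerivAt Φ (φ t) t) (hφ : Continuous φ) (x : ℝ)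
    {y : ℝ} (hy : 0 < y) :
    ∫ s, φ (x + y * s) ∂ω = ∫ s, cauchyDerivKernel s • y⁻¹ • (Φ (x + y * s) - Φ x) := by
  set v : ℝ → E := fun s => y⁻¹ • (Φ (x + y * s) - Φ x)
  have hv : ∀ s, ‖v s‖ ≤ K * |s| := norm_inv_smul_dilation_sub_le hΦ x hy
  have hv' : ∀ s, HasDerivAt v (φ (x + y * s)) s := fun s => by
    have h : HasDerivAt (fun s : ℝ => x + y * s) y s := by
      simpa using ((hasDerivAt_id s).const_mul y).const_add x
    have hcomp := (((hderiv (x + y * s)).scomp s h).sub_const (Φ x)).const_smul y⁻¹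
    rwa [smul_smul, inv_mul_cancel₀ hy.ne', one_smul] at hcomp
  have hφ_bdd : ∀ t, ‖φ t‖ ≤ K := fun t => (hderiv t).deriv ▸ norm_deriv_le_of_lipschitz hΦ
  have hint : Integrable fun s : ℝ => (π⁻¹ * (1 + s ^ 2)⁻¹) • φ (x + y * s) :=
    (integrable_inv_one_add_sq.const_mul π⁻¹).smul_bdd K
      (hφ.comp (by fun_prop)).aestronglyMeasurable (ae_of_all _ fun s => hφ_bdd _)
  have hint' : Integrable fun s : ℝ => cauchyDerivKernel s • v s := by
    refine (integrable_norm_cauchyDerivKernel_mul_abs.const_mul (K : ℝ)).mono'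
      (continuous_cauchyDerivKernel.smul
        (continuous_inv_smul_dilation_sub hΦ.continuous x y)).aestronglyMeasurable
      (ae_of_all _ fun s => ?_)
    rw [norm_smul, mul_left_comm]
    gcongr
    exact hv s
  have hparts := integral_of_hasDerivAt_of_tendsto
    (fun s => (hasDerivAt_cauchyDensity s).smul (hv' s))
    (by simpa only [neg_smul, ← sub_eq_add_neg, Pi.sub_def] using hint.sub hint')
    ((tendsto_cauchyDensity_smul_cocompact hv).mono_left atBot_le_cocompact)
    ((tendsto_cauchyDensity_smul_cocompact hv).mono_left atTop_le_cocompact)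
  simp only [neg_smul, ← sub_eq_add_neg] at hparts
  rw [integral_standardCauchy, ← sub_eq_zero, ← integral_sub hint hint', hparts, sub_zero]

lemma norm_primitive_line_sub_le {H : ℂ → ℂ} {B : ℝ} (hH : DifferentiableOn ℂ H upperHalfPlaneSet)
    (hB : ∀ z ∈ upperHalfPlaneSet, ‖H z‖ ≤ B) (x : ℝ) {η η' : ℝ} (hη : 0 < η) (hη' : 0 < η') :
    ‖(∫ t in (0 : ℝ)..x, H (t + η * I)) - ∫ t in (0 : ℝ)..x, H (t + η' * I)‖
      ≤ 2 * B * |η - η'| := by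
  have hpos : ∀ t ∈ uIcc η η', 0 < t := fun t ht => (lt_min hη hη').trans_le ht.1
  have hrect := Complex.integral_boundary_rect_eq_zero_of_differentiableOn H (η * I) (x + η' * I)
    (hH.mono fun z hz => hpos _ (by simpa using hz.2))
  simp only [Complex.mul_im, Complex.ofReal_re, Complex.I_im, mul_one, Complex.ofReal_im,
    Complex.I_re, mul_zero, add_zero, Complex.mul_re, sub_self, Complex.add_re, Complex.add_im,
    zero_add, smul_eq_mul, Complex.ofReal_zero] at hrect
  have hside : ∀ a : ℝ, ‖∫ y in η..η', H (a + y * I)‖ ≤ B * |η' - η| := fun a =>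
    intervalIntegral.norm_integral_le_of_norm_le_const fun t ht =>
      hB _ (by simpa [upperHalfPlaneSet] using hpos t (uIoc_subset_uIcc ht))
  have hsides : (∫ t in (0 : ℝ)..x, H (t + η * I)) - ∫ t in (0 : ℝ)..x, H (t + η' * I)
      = I * (∫ y in η..η', H ((0 : ℝ) + y * I)) - I * ∫ y in η..η', H (x + y * I) := by
    simp only [Complex.ofReal_zero, zero_add]
    linear_combination hrect
  rw [hsides]
  refine (norm_sub_le _ _).trans ?_
  rw [norm_mul, norm_mul, Complex.norm_I, one_mul, one_mul, abs_sub_comm η η', mul_assoc, two_mul]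
  exact add_le_add (hside 0) (hside x)

lemma lipschitzWith_primitive_line {H : ℂ → ℂ} {B : ℝ≥0}
    (hH : DifferentiableOn ℂ H upperHalfPlaneSet) (hB : ∀ z ∈ upperHalfPlaneSet, ‖H z‖ ≤ B)
    {η : ℝ} (hη : 0 < η) : LipschitzWith B fun x : ℝ => ∫ t in (0 : ℝ)..x, H (t + η * I) := by
  have hcont := continuous_comp_line hH hη
  refine LipschitzWith.of_dist_le_mul fun a b => ?_
  rw [dist_eq_norm, intervalIntegral.integral_interval_sub_left (hcont.intervalIntegrable _ _)
    (hcont.intervalIntegrable _ _), Real.dist_eq]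
  exact intervalIntegral.norm_integral_le_of_norm_le_const fun t _ =>
    hB _ (by simpa [upperHalfPlaneSet] using hη)

lemma exists_lipschitzWith_boundary_primitive {H : ℂ → ℂ} {B : ℝ≥0}
    (hH : DifferentiableOn ℂ H upperHalfPlaneSet) (hB : ∀ z ∈ upperHalfPlaneSet, ‖H z‖ ≤ B) :
    ∃ Φ : ℝ → ℂ, LipschitzWith B Φ ∧ ∀ x : ℝ,
      Tendsto (fun η : ℝ => ∫ t in (0 : ℝ)..x, H (t + η * I)) (𝓝[>] 0) (𝓝 (Φ x)) := by
  have hlim : ∀ x : ℝ, ∃ p, Tendsto (fun η : ℝ => ∫ t in (0 : ℝ)..x, H (t + η * I))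
      (𝓝[>] 0) (𝓝 p) := fun x => by
    have hlip : LipschitzOnWith (2 * B) (fun η : ℝ => ∫ t in (0 : ℝ)..x, H (t + η * I)) (Ioi 0) :=
      LipschitzOnWith.of_dist_le_mul fun η hη η' hη' => by
        rw [dist_eq_norm, Real.dist_eq]
        exact norm_primitive_line_sub_le hH hB x hη hη'
    obtain ⟨g, hg, hgeq⟩ := hlip.extend_finite_dimension
    exact ⟨g 0, (hg.continuous.tendsto' 0 _ rfl |>.mono_left nhdsWithin_le_nhds).congr'
      (eventually_nhdsWithin_of_forall fun η hη => (hgeq hη).symm)⟩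
  choose Φ hΦ using hlim
  refine ⟨Φ, LipschitzWith.of_dist_le_mul fun a b => ?_, hΦ⟩
  exact le_of_tendsto ((hΦ a).dist (hΦ b)) (eventually_nhdsWithin_of_forall fun η hη =>
    (lipschitzWith_primitive_line hH hB hη).dist_le_mul a b)

lemma tendsto_comp_add_mul_I {H : ℂ → ℂ} (hH : DifferentiableOn ℂ H upperHalfPlaneSet) (x : ℝ)
    {y : ℝ} (hy : 0 < y) :
    Tendsto (fun η : ℝ => H (x + (y + η) * I)) (𝓝[>] 0) (𝓝 (H (x + y * I))) := by
  have hcont : ContinuousAt H (x + (y + (0 : ℝ)) * I) :=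
    (hH.differentiableAt (isOpen_upperHalfPlaneSet.mem_nhds (by simpa using hy))).continuousAt
  have hline : ContinuousAt (fun η : ℝ => H (x + (y + η) * I)) 0 :=
    ContinuousAt.comp (g := H) (f := fun η : ℝ => (x : ℂ) + (y + η) * I) hcont (by fun_prop)
  simpa using hline.tendsto.mono_left nhdsWithin_le_nhds

lemma eq_integral_cauchyDerivKernel_smul {H : ℂ → ℂ} {B : ℝ≥0} {Φ : ℝ → ℂ}
    (hH : DifferentiableOn ℂ H upperHalfPlaneSet) (hB : ∀ z ∈ upperHalfPlaneSet, ‖H z‖ ≤ B)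
    (hΦ : ∀ x : ℝ, Tendsto (fun η : ℝ => ∫ t in (0 : ℝ)..x, H (t + η * I)) (𝓝[>] 0) (𝓝 (Φ x)))
    (x : ℝ) {y : ℝ} (hy : 0 < y) :
    H (x + y * I) = ∫ s, cauchyDerivKernel s • y⁻¹ • (Φ (x + y * s) - Φ x) := by
  refine tendsto_nhds_unique (tendsto_comp_add_mul_I hH x hy) ((tendsto_congr' ?_).2
    (tendsto_integral_cauchyDerivKernel_smul (C := B)
      (Ψ := fun η : ℝ => fun s => y⁻¹ • ((∫ t in (0 : ℝ)..x + y * s, H (t + η * I))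
        - ∫ t in (0 : ℝ)..x, H (t + η * I)))
      (eventually_nhdsWithin_of_forall fun η hη => continuous_inv_smul_dilation_sub
        (lipschitzWith_primitive_line hH hB hη).continuous x y)
      (eventually_nhdsWithin_of_forall fun η hη =>
        norm_inv_smul_dilation_sub_le (lipschitzWith_primitive_line hH hB hη) x hy)
      fun s => ((hΦ _).sub (hΦ _)).const_smul _))
  refine eventually_nhdsWithin_of_forall fun η (hη : 0 < η) => ?_
  have hcont := continuous_comp_line hH hη
  beta_reduce
  rw [← integral_dilated_line_standardCauchy hη hH (B := B)
    (fun z hz => hB z (hη.trans_le hz)) x hy,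
    ← integral_dilation_standardCauchy (lipschitzWith_primitive_line hH hB hη)
      (fun t => intervalIntegral.integral_hasDerivAt_right (hcont.intervalIntegrable _ _)
        (hcont.stronglyMeasurableAtFilter _ _) hcont.continuousAt) hcont x hy]
  push_cast
  rfl

/-- `h` is the boundary function of `H`, a function on the upper half-plane: almost everywhere,
`H` has the vertical limit `h x` at the point `x` of the real line. -/
def HasBoundaryValues (H : ℂ → E) (h : ℝ → E) : Prop :=
  ∀ᵐ x : ℝ, Tendsto (fun y : ℝ => H (x + y * I)) (𝓝[>] 0) (𝓝 (h x))

theorem exists_hasBoundaryValues_of_bounded {H : ℂ → ℂ} {B : ℝ}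
    (hH : DifferentiableOn ℂ H upperHalfPlaneSet) (hB : ∀ z ∈ upperHalfPlaneSet, ‖H z‖ ≤ B) :
    ∃ h, HasBoundaryValues H h := by
  lift B to ℝ≥0 using (norm_nonneg _).trans (hB I (by simp [upperHalfPlaneSet]))
  obtain ⟨Φ, hΦ, hΦlim⟩ := exists_lipschitzWith_boundary_primitive hH hB
  suffices h : ∀ᵐ x : ℝ, ∃ p, Tendsto (fun y : ℝ => H (x + y * I)) (𝓝[>] 0) (𝓝 p) from h.choice
  filter_upwards [hΦ.ae_differentiableAt] with x hx
  refine ⟨∫ s, cauchyDerivKernel s • s • deriv Φ x, (tendsto_congr' ?_).2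
    (tendsto_integral_cauchyDerivKernel_smul (C := B)
      (Ψ := fun y : ℝ => fun s => y⁻¹ • (Φ (x + y * s) - Φ x))
      (Eventually.of_forall fun y => continuous_inv_smul_dilation_sub hΦ.continuous x y)
      (eventually_nhdsWithin_of_forall fun y hy => norm_inv_smul_dilation_sub_le hΦ x hy)
      fun s => ?_)⟩
  · exact eventually_nhdsWithin_of_forall fun y hy =>
      eq_integral_cauchyDerivKernel_smul hH hB hΦlim x hy
  · have hline : HasDerivAt (fun y : ℝ => x + y * s) s 0 := by
      simpa using ((hasDerivAt_id (0 : ℝ)).mul_const s).const_add x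
    have hcomp := HasDerivAt.scomp (h := fun y : ℝ => x + y * s) (g₁ := Φ) 0
      (g₁' := deriv Φ x)
      (by simpa only [zero_mul, add_zero] using hx.hasDerivAt) hline
    simpa only [Function.comp_def, zero_add, zero_mul, add_zero] using
      hcomp.tendsto_slope_zero_right

end Fatou

/-! ### Integrals of boundary values -/

lemma integrable_of_tendsto_of_integral_norm_le {α ι F : Type*} [MeasurableSpace α]
    {μ : Measure α} [NormedAddCommGroup F] {l : Filter ι} [l.NeBot] [l.IsCountablyGenerated]
    {f : ι → α → F} {g : α → F} {C : ℝ} (hf : ∀ᶠ i in l, Integrable (f i) μ)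
    (hC : ∀ᶠ i in l, ∫ x, ‖f i x‖ ∂μ ≤ C)
    (hlim : ∀ᵐ x ∂μ, Tendsto (fun i => f i x) l (𝓝 (g x))) :
    Integrable g μ ∧ ∫ x, ‖g x‖ ∂μ ≤ C := by
  obtain ⟨i, hil, hi⟩ := exists_seq_forall_of_frequently (hf.and hC).frequently
  have hlim_seq : ∀ᵐ x ∂μ, Tendsto (fun n => f (i n) x) atTop (𝓝 (g x)) :=
    hlim.mono fun x hx => hx.comp hil
  have hmeas : AEStronglyMeasurable g μ :=
    aestronglyMeasurable_of_tendsto_ae atTop (fun n => (hi n).1.1) hlim_seq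
  have hle : eLpNorm g 1 μ ≤ ENNReal.ofReal C :=
    (Lp.eLpNorm_lim_le_liminf_eLpNorm (fun n => (hi n).1.1) g hlim_seq).trans <|
      liminf_le_of_le (by isBoundedDefault) fun b hb => by
        obtain ⟨n, hn⟩ := hb.exists
        rw [eLpNorm_one_eq_lintegral_enorm,
          ← ofReal_integral_norm_eq_lintegral_enorm (hi n).1] at hn
        exact hn.trans (ENNReal.ofReal_le_ofReal (hi n).2)
  have hint : Integrable g μ :=
    memLp_one_iff_integrable.1 ⟨hmeas, hle.trans_lt ENNReal.ofReal_lt_top⟩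
  have hC0 : 0 ≤ C := (integral_nonneg fun x => norm_nonneg _).trans (hi 0).2
  rw [eLpNorm_one_eq_lintegral_enorm, ← ofReal_integral_norm_eq_lintegral_enorm hint] at hle
  exact ⟨hint, (ENNReal.ofReal_le_ofReal_iff hC0).1 hle⟩

lemma HasBoundaryValues.aestronglyMeasurable {H : ℂ → ℂ} {h : ℝ → ℂ}
    (hh : HasBoundaryValues H h) (hH : DifferentiableOn ℂ H upperHalfPlaneSet) :
    AEStronglyMeasurable h ω := by
  obtain ⟨η, hη, hη_pos⟩ := exists_seq_forall_of_frequently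
    (eventually_mem_nhdsWithin (a := (0 : ℝ)) (s := Ioi 0)).frequently
  exact aestronglyMeasurable_of_tendsto_ae atTop
    (fun n => (continuous_comp_line hH (hη_pos n)).aestronglyMeasurable)
    (ae_standardCauchy_iff.2 (hh.mono fun x hx => hx.comp hη))

theorem HasBoundaryValues.integral_standardCauchy {H : ℂ → ℂ} {h : ℝ → ℂ} {B : ℝ}
    (hh : HasBoundaryValues H h) (hH : DifferentiableOn ℂ H upperHalfPlaneSet)
    (hB : ∀ z ∈ upperHalfPlaneSet, ‖H z‖ ≤ B) : ∫ x, h x ∂ω = H I := by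
  have hlim : Tendsto (fun η : ℝ => ∫ x : ℝ, H (x + η * I) ∂ω) (𝓝[>] 0) (𝓝 (∫ x, h x ∂ω)) :=
    tendsto_integral_filter_of_dominated_convergence (fun _ => B)
      (eventually_nhdsWithin_of_forall fun η hη =>
        (continuous_comp_line hH hη).aestronglyMeasurable)
      (eventually_nhdsWithin_of_forall fun η hη => ae_of_all _ fun x =>
        hB _ (by simpa [upperHalfPlaneSet] using hη))
      (integrable_const B) (ae_standardCauchy_iff.2 hh)
  refine tendsto_nhds_unique hlim (((tendsto_comp_add_mul_I hH 0 one_pos).congr' ?_).trans_eq ?_)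
  · refine eventually_nhdsWithin_of_forall fun η (hη : 0 < η) => ?_
    beta_reduce
    rw [integral_line_standardCauchy hη hH fun z hz => hB z (hη.trans_le hz)]
    simp
  · simp

lemma exists_tendsto_of_tendsto_exp {g : ℝ → ℂ} {c : ℂ} (hg : ContinuousOn g (Ioi 0)) (hc : c ≠ 0)
    (h : Tendsto (fun y => Complex.exp (g y)) (𝓝[>] 0) (𝓝 c)) :
    ∃ p, Tendsto g (𝓝[>] 0) (𝓝 p) := by
  set q : ℝ → ℂ := fun y => Complex.exp (g y) / c
  have hq : Tendsto q (𝓝[>] 0) (𝓝 1) := by simpa [hc] using h.div_const c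
  obtain ⟨δ, hδ, hslit⟩ : ∃ δ > 0, ∀ y ∈ Ioo 0 δ, q y ∈ Complex.slitPlane :=
    mem_nhdsGT_iff_exists_Ioo_subset.1
      (hq (Complex.isOpen_slitPlane.mem_nhds Complex.one_mem_slitPlane))
  have hcont : ContinuousOn (fun y => g y - Complex.log (q y)) (Ioo 0 δ) := by
    have hg' := hg.mono (Ioo_subset_Ioi_self : Ioo 0 δ ⊆ _)
    exact hg'.sub ((hg'.cexp.div_const c).clog hslit)
  have hexp : ∀ y ∈ Ioo 0 δ, g y - Complex.log (q y) ∈ Complex.exp ⁻¹' {c} := fun y hy => by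
    rw [mem_preimage, Complex.exp_sub, Complex.exp_log (Complex.slitPlane_ne_zero (hslit y hy))]
    exact div_div_cancel₀ (Complex.exp_ne_zero _)
  obtain ⟨p, -, hp⟩ := isPreconnected_Ioo.eqOn_const_of_mapsTo
    (isDiscrete_iff_discreteTopology.2 (Complex.isCoveringMapOn_exp c hc).1) hcont hexp
    (hexp _ ⟨half_pos hδ, half_lt_self hδ⟩ |> nonempty_of_mem)
  have hlog : Tendsto (fun y => Complex.log (q y)) (𝓝[>] 0) (𝓝 0) := by
    simpa using hq.clog Complex.one_mem_slitPlane
  refine ⟨p, ((hlog.const_add p).congr' ?_).trans_eq (by rw [add_zero])⟩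
  filter_upwards [Ioo_mem_nhdsGT hδ] with y hy
  exact (add_comm _ _).trans (sub_eq_iff_eq_add'.1 (hp hy)).symm

theorem exists_hasBoundaryValues_of_tendsto_re {H : ℂ → ℂ} {r : ℝ → ℝ} {c : ℝ}
    (hH : DifferentiableOn ℂ H upperHalfPlaneSet) (hc : ∀ z ∈ upperHalfPlaneSet, c ≤ (H z).re)
    (hr : HasBoundaryValues (fun z => (H z).re) r) : ∃ h, HasBoundaryValues H h := by
  obtain ⟨k, hk⟩ := exists_hasBoundaryValues_of_bounded (H := fun z => Complex.exp (-H z))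
    (B := Real.exp (-c)) hH.neg.cexp fun z hz => by
      rw [Complex.norm_exp]
      exact Real.exp_le_exp.2 (neg_le_neg (hc z hz))
  suffices h : ∀ᵐ x : ℝ, ∃ p, Tendsto (fun y : ℝ => H (x + y * I)) (𝓝[>] 0) (𝓝 p) from h.choice
  filter_upwards [hk, hr] with x hkx hrx
  have hkx_norm : ‖k x‖ = Real.exp (-r x) := by
    refine tendsto_nhds_unique hkx.norm ?_
    simpa only [Complex.norm_exp, Complex.neg_re] using hrx.neg.rexp
  have hcont : ContinuousOn (fun y : ℝ => -H (x + y * I)) (Ioi 0) :=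
    (hH.continuousOn.comp (by fun_prop) fun y hy => by simpa [upperHalfPlaneSet] using hy).neg
  obtain ⟨p, hp⟩ := exists_tendsto_of_tendsto_exp hcont
    (norm_ne_zero_iff.1 (hkx_norm ▸ (Real.exp_pos _).ne')) hkx
  exact ⟨-p, by simpa using hp.neg⟩

/-! ### Holomorphic functions with values in a right half-plane -/

lemma HasBoundaryValues.mem_of_isClosed {F : Type*} [NormedAddCommGroup F] {H : ℂ → F} {h : ℝ → F}
    (hh : HasBoundaryValues H h) {S : Set F} (hS : IsClosed S)
    (hH : ∀ z ∈ upperHalfPlaneSet, H z ∈ S) : ∀ᵐ x ∂ω, h x ∈ S :=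
  ae_standardCauchy_iff.2 <| hh.mono fun x hx => hS.mem_of_tendsto hx <|
    eventually_nhdsWithin_of_forall fun y hy => hH _ (by simpa [upperHalfPlaneSet] using hy)

lemma HasBoundaryValues.comp {F G : Type*} [NormedAddCommGroup F] [NormedAddCommGroup G]
    {H : ℂ → F} {h : ℝ → F} (hh : HasBoundaryValues H h) {Φ : F → G}
    (hΦ : ∀ᵐ x ∂ω, ContinuousAt Φ (h x)) :
    HasBoundaryValues (fun z => Φ (H z)) fun x => Φ (h x) := by
  filter_upwards [hh, ae_standardCauchy_iff.1 hΦ] with x hx hΦx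
  exact hΦx.tendsto.comp hx

lemma HasBoundaryValues.integral_comp {W Φ : ℂ → ℂ} {w : ℝ → ℂ} {B : ℝ}
    (hw : HasBoundaryValues W w) (hW : DifferentiableOn ℂ W upperHalfPlaneSet)
    (hre : ∀ z ∈ upperHalfPlaneSet, 1 ≤ (W z).re) (hB : ∀ z ∈ upperHalfPlaneSet, ‖W z‖ ≤ B)
    (hΦ : DifferentiableOn ℂ Φ {z | 0 < z.re}) :
    Integrable (fun x => Φ (w x)) ω ∧ ∫ x, Φ (w x) ∂ω = Φ (W I) := by
  have hright : {z : ℂ | 1 ≤ z.re} ⊆ {z | 0 < z.re} := fun z (hz : 1 ≤ z.re) => one_pos.trans_le hz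
  have hopen : IsOpen {z : ℂ | 0 < z.re} := isOpen_lt continuous_const Complex.continuous_re
  have hclosed : IsClosed {z : ℂ | 1 ≤ z.re} := isClosed_le continuous_const Complex.continuous_re
  obtain ⟨C, hC⟩ := IsCompact.exists_bound_of_continuousOn
    ((isCompact_closedBall (0 : ℂ) B).inter_right hclosed)
    (hΦ.continuousOn.mono (inter_subset_right.trans hright))
  have hmem : ∀ᵐ x ∂ω, w x ∈ Metric.closedBall 0 B ∩ {z : ℂ | 1 ≤ z.re} :=
    hw.mem_of_isClosed (Metric.isClosed_closedBall.inter hclosed) fun z hz =>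
      ⟨mem_closedBall_zero_iff.2 (hB z hz), hre z hz⟩
  have hΦw := hw.comp (hmem.mono fun x hx =>
    (hΦ.differentiableAt (hopen.mem_nhds (hright hx.2))).continuousAt)
  have hΦW := hΦ.comp hW fun z hz => hright (hre z hz)
  refine ⟨Integrable.of_bound (hΦw.aestronglyMeasurable hΦW) C (hmem.mono fun x hx => hC _ hx),
    hΦw.integral_standardCauchy hΦW fun z hz =>
      hC _ ⟨mem_closedBall_zero_iff.2 (hB z hz), hre z hz⟩⟩

/-- A Möbius transformation of the half-plane `{z | 1 ≤ z.re}` into a bounded part of itself, which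
tends to the identity as `δ → 0`. It truncates unbounded functions holomorphically. -/
def halfPlaneTrunc (δ : ℝ) (z : ℂ) : ℂ := (1 + δ) * z / (1 + δ * z)

section Truncation

variable {δ : ℝ} {z : ℂ}

lemma one_add_le_norm_one_add_mul (hδ : 0 < δ) (hz : 1 ≤ z.re) : 1 + δ ≤ ‖1 + δ * z‖ := by
  refine le_trans ?_ (Complex.re_le_norm _)
  simpa using le_mul_of_one_le_right hδ.le hz

lemma one_add_mul_ne_zero (hδ : 0 < δ) (hz : 1 ≤ z.re) : (1 + δ * z : ℂ) ≠ 0 :=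
  norm_pos_iff.1 (by linarith [one_add_le_norm_one_add_mul hδ hz])

lemma norm_halfPlaneTrunc (hδ : 0 < δ) : ‖halfPlaneTrunc δ z‖ = (1 + δ) * ‖z‖ / ‖1 + δ * z‖ := by
  rw [halfPlaneTrunc, norm_div, norm_mul, ← Complex.ofReal_one, ← Complex.ofReal_add,
    Complex.norm_of_nonneg (by positivity)]

lemma norm_halfPlaneTrunc_le (hδ : 0 < δ) (hz : 1 ≤ z.re) : ‖halfPlaneTrunc δ z‖ ≤ ‖z‖ := by
  have h := one_add_le_norm_one_add_mul hδ hz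
  rw [norm_halfPlaneTrunc hδ, div_le_iff₀ (by linarith), mul_comm]
  gcongr

lemma norm_halfPlaneTrunc_le_div (hδ : 0 < δ) (hz : 1 ≤ z.re) :
    ‖halfPlaneTrunc δ z‖ ≤ (1 + δ) / δ := by
  have h := one_add_le_norm_one_add_mul hδ hz
  have hnorm : ‖δ * z‖ = δ * ‖z‖ := by rw [norm_mul, Complex.norm_of_nonneg hδ.le]
  have hle : δ * ‖z‖ ≤ ‖1 + δ * z‖ := by
    rw [← hnorm, Complex.norm_def, Complex.norm_def]
    refine Real.sqrt_le_sqrt ?_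
    rw [Complex.normSq_add, map_one, one_mul, Complex.conj_re, Complex.re_ofReal_mul]
    linarith [mul_nonneg hδ.le (zero_le_one.trans hz)]
  rw [norm_halfPlaneTrunc hδ, div_le_div_iff₀ (by linarith) hδ, mul_assoc, mul_comm ‖z‖]
  gcongr

lemma one_le_re_halfPlaneTrunc (hδ : 0 < δ) (hz : 1 ≤ z.re) : 1 ≤ (halfPlaneTrunc δ z).re := by
  have hsub : halfPlaneTrunc δ z - 1 = (z - 1) / (1 + δ * z) := by
    rw [halfPlaneTrunc]
    field_simp [one_add_mul_ne_zero hδ hz]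
    ring
  rw [← sub_nonneg, ← Complex.one_re, ← Complex.sub_re, hsub, Complex.div_re, ← add_div]
  refine div_nonneg ?_ (Complex.normSq_nonneg _)
  simp only [Complex.sub_re, Complex.one_re, Complex.add_re, Complex.mul_re, Complex.ofReal_re,
    Complex.ofReal_im, zero_mul, sub_zero, Complex.sub_im, Complex.one_im, Complex.add_im,
    Complex.mul_im, add_zero, zero_add]
  nlinarith [mul_nonneg hδ.le (sq_nonneg z.im), mul_nonneg (sub_nonneg.2 hz)
    (mul_nonneg hδ.le (zero_le_one.trans hz))]

lemma im_halfPlaneTrunc :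
    (halfPlaneTrunc δ z).im = (1 + δ) / ‖1 + δ * z‖ ^ 2 * z.im := by
  rw [halfPlaneTrunc, Complex.div_im, ← Complex.normSq_eq_norm_sq]
  simp only [Complex.mul_im, Complex.add_re, Complex.one_re, Complex.ofReal_re, Complex.add_im,
    Complex.one_im, Complex.ofReal_im, add_zero, zero_mul, Complex.mul_re, sub_zero, zero_add]
  ring

lemma abs_im_halfPlaneTrunc_le (hδ : 0 < δ) (hz : 1 ≤ z.re) :
    |(halfPlaneTrunc δ z).im| ≤ |z.im| := by
  have h := one_add_le_norm_one_add_mul hδ hz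
  rw [im_halfPlaneTrunc, abs_mul, abs_of_nonneg (by positivity)]
  refine mul_le_of_le_one_left (abs_nonneg _) (div_le_one_of_le₀ ?_ (by positivity))
  nlinarith

lemma im_halfPlaneTrunc_nonneg (hδ : 0 < δ) (hz : 0 ≤ z.im) : 0 ≤ (halfPlaneTrunc δ z).im := by
  rw [im_halfPlaneTrunc]
  positivity

lemma tendsto_halfPlaneTrunc (z : ℂ) :
    Tendsto (fun δ : ℝ => halfPlaneTrunc δ z) (𝓝[>] 0) (𝓝 z) := by
  have h : ContinuousAt (fun δ : ℝ => (1 + δ) * z / (1 + δ * z)) 0 :=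
    ContinuousAt.div (by fun_prop) (by fun_prop) (by simp)
  simpa [halfPlaneTrunc] using h.tendsto.mono_left nhdsWithin_le_nhds

lemma differentiableOn_halfPlaneTrunc (hδ : 0 < δ) :
    DifferentiableOn ℂ (halfPlaneTrunc δ) {z | 1 ≤ z.re} :=
  DifferentiableOn.div (by fun_prop) (by fun_prop) fun _ hz => one_add_mul_ne_zero hδ hz

lemma HasBoundaryValues.integral_comp_halfPlaneTrunc {W Φ : ℂ → ℂ} {w : ℝ → ℂ}
    (hw : HasBoundaryValues W w) (hW : DifferentiableOn ℂ W upperHalfPlaneSet)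
    (hre : ∀ z ∈ upperHalfPlaneSet, 1 ≤ (W z).re) (hδ : 0 < δ)
    (hΦ : DifferentiableOn ℂ Φ {z | 0 < z.re}) :
    Integrable (fun x => Φ (halfPlaneTrunc δ (w x))) ω ∧
      ∫ x, Φ (halfPlaneTrunc δ (w x)) ∂ω = Φ (halfPlaneTrunc δ (W I)) := by
  have hclosed : IsClosed {z : ℂ | 1 ≤ z.re} := isClosed_le continuous_const Complex.continuous_re
  refine (hw.comp (Φ := halfPlaneTrunc δ) ?_).integral_comp
    ((differentiableOn_halfPlaneTrunc hδ).comp hW hre)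
    (fun z hz => one_le_re_halfPlaneTrunc hδ (hre z hz))
    (fun z hz => norm_halfPlaneTrunc_le_div hδ (hre z hz)) hΦ
  filter_upwards [hw.mem_of_isClosed hclosed hre] with x hx
  exact ContinuousAt.div (by fun_prop) (by fun_prop) (one_add_mul_ne_zero hδ hx)

end Truncation

lemma integral_abs_le_abs_integral_add {α : Type*} [MeasurableSpace α] {μ : Measure α}
    {v : α → ℝ} {S : Set α} (hS : MeasurableSet S) (hv : Integrable v μ)
    (h0 : ∀ᵐ x ∂μ, x ∉ S → 0 ≤ v x) :
    ∫ x, |v x| ∂μ ≤ |∫ x, v x ∂μ| + 2 * ∫ x in S, |v x| ∂μ := by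
  have hS_int : Integrable (S.indicator fun x => |v x|) μ := hv.abs.indicator hS
  calc ∫ x, |v x| ∂μ ≤ ∫ x, (v x + 2 * S.indicator (fun x => |v x|) x) ∂μ := by
        refine integral_mono_ae hv.abs (hv.add (hS_int.const_mul 2)) ?_
        filter_upwards [h0] with x hx
        by_cases hxS : x ∈ S
        · simp only [indicator_of_mem hxS]
          linarith [neg_le_abs (v x)]
        · simp only [indicator_of_notMem hxS, mul_zero, add_zero, abs_of_nonneg (hx hxS), le_refl]
    _ = (∫ x, v x ∂μ) + 2 * ∫ x in S, |v x| ∂μ := by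
        rw [integral_add hv (hS_int.const_mul 2), integral_const_mul, integral_indicator hS]
    _ ≤ |∫ x, v x ∂μ| + 2 * ∫ x in S, |v x| ∂μ := by gcongr; exact le_abs_self _

section RightHalfPlane

variable {W : ℂ → ℂ} {w : ℝ → ℂ} (hw : HasBoundaryValues W w)
  (hW : DifferentiableOn ℂ W upperHalfPlaneSet) (hre : ∀ z ∈ upperHalfPlaneSet, 1 ≤ (W z).re)
include hw hW hre

theorem HasBoundaryValues.integral_abs_im_le {S : Set ℝ} (hS : MeasurableSet S)
    (h0 : ∀ᵐ x ∂ω, x ∉ S → 0 ≤ (w x).im) (hint : IntegrableOn (fun x => (w x).im) S ω) :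
    Integrable (fun x => (w x).im) ω ∧
      ∫ x, |(w x).im| ∂ω ≤ ‖W I‖ + 2 * ∫ x in S, |(w x).im| ∂ω := by
  have hw_re : ∀ᵐ x ∂ω, 1 ≤ (w x).re :=
    hw.mem_of_isClosed (isClosed_le continuous_const Complex.continuous_re) hre
  have htrunc : ∀ δ : ℝ, 0 < δ → Integrable (fun x => (halfPlaneTrunc δ (w x)).im) ω ∧
      ∫ x, |(halfPlaneTrunc δ (w x)).im| ∂ω ≤ ‖W I‖ + 2 * ∫ x in S, |(w x).im| ∂ω := by
    intro δ hδ
    obtain ⟨hδ_int, hδ_eq⟩ := hw.integral_comp_halfPlaneTrunc hW hre hδ differentiableOn_id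
    have hδ_im : ∫ x, (halfPlaneTrunc δ (w x)).im ∂ω = (halfPlaneTrunc δ (W I)).im :=
      (Complex.imCLM.integral_comp_comm hδ_int).trans (congrArg Complex.im hδ_eq)
    refine ⟨hδ_int.im, ?_⟩
    calc ∫ x, |(halfPlaneTrunc δ (w x)).im| ∂ω
        ≤ |(halfPlaneTrunc δ (W I)).im| + 2 * ∫ x in S, |(halfPlaneTrunc δ (w x)).im| ∂ω :=
          hδ_im ▸ integral_abs_le_abs_integral_add hS hδ_int.im
            (h0.mono fun x hx hxS => im_halfPlaneTrunc_nonneg hδ (hx hxS))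
      _ ≤ ‖W I‖ + 2 * ∫ x in S, |(w x).im| ∂ω := by
          gcongr ?_ + 2 * ?_
          · exact (Complex.abs_im_le_norm _).trans
              (norm_halfPlaneTrunc_le hδ (hre I (by simp [upperHalfPlaneSet])))
          · exact integral_mono_ae hδ_int.im.abs.integrableOn hint.abs
              (ae_restrict_of_ae (hw_re.mono fun x hx => abs_im_halfPlaneTrunc_le hδ hx))
  exact integrable_of_tendsto_of_integral_norm_le (l := 𝓝[>] (0 : ℝ))
    (eventually_nhdsWithin_of_forall fun δ hδ => (htrunc δ hδ).1)
    (eventually_nhdsWithin_of_forall fun δ hδ => (htrunc δ hδ).2)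
    (ae_of_all _ fun x => (Complex.continuous_im.tendsto _).comp (tendsto_halfPlaneTrunc (w x)))

end RightHalfPlane

lemma abs_sin_div_two_le {θ : ℝ} (hθ : |θ| < π / 2) :
    |Real.sin θ| / 2
      ≤ Real.cos θ * Real.log (Real.cos θ) + 2 * Real.cos θ + θ * Real.sin θ := by
  wlog hθ0 : 0 ≤ θ generalizing θ
  · simpa using this (θ := -θ) (by rwa [abs_neg]) (by linarith)
  have hcos : 0 < Real.cos θ := Real.cos_pos_of_mem_Ioo (abs_lt.1 hθ)
  have hlog : 1 - (4 * Real.cos θ)⁻¹ ≤ 2 * Real.log 2 + Real.log (Real.cos θ) := by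
    have h := Real.one_sub_inv_le_log_of_pos (by positivity : 0 < 4 * Real.cos θ)
    have hlog4 : Real.log 4 = 2 * Real.log 2 := by
      rw [show (4 : ℝ) = 2 ^ 2 by norm_num, Real.log_pow, Nat.cast_ofNat]
    rwa [Real.log_mul (by norm_num) hcos.ne', hlog4] at h
  have hcos_log : Real.cos θ - 1 / 4 - 2 * Real.log 2 * Real.cos θ
      ≤ Real.cos θ * Real.log (Real.cos θ) := by
    have h := mul_le_mul_of_nonneg_left hlog hcos.le
    field_simp at h
    linarith
  have hsin0 : 0 ≤ Real.sin θ :=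
    Real.sin_nonneg_of_nonneg_of_le_pi hθ0 (by linarith [le_abs_self θ, Real.pi_pos])
  have hsin : Real.sin θ ^ 2 ≤ θ * Real.sin θ := by
    rw [sq]
    gcongr
    exact Real.sin_le hθ0
  have hlog2 := mul_lt_mul_of_pos_right Real.log_two_lt_d9 hcos
  rw [abs_of_nonneg hsin0]
  nlinarith [Real.cos_sq_add_sin_sq θ, Real.sin_le_one θ, Real.cos_le_one θ]

lemma re_mul_log (z : ℂ) :
    (z * Complex.log z).re = z.re * Real.log ‖z‖ - z.im * Complex.arg z := by
  rw [Complex.mul_re, Complex.log_re, Complex.log_im]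

lemma abs_im_div_two_le {z : ℂ} (hz : 0 < z.re) :
    |z.im| / 2 ≤ z.re * Real.log z.re + 2 * z.re - (z * Complex.log z).re := by
  have hz0 : 0 < ‖z‖ := norm_pos_iff.2 fun h => by simp [h] at hz
  have harg : |z.arg| < π / 2 := Complex.abs_arg_lt_pi_div_two_iff.2 (Or.inl hz)
  have hcos : 0 < Real.cos z.arg := Real.cos_pos_of_mem_Ioo (abs_lt.1 harg)
  have htrig := mul_le_mul_of_nonneg_left (abs_sin_div_two_le harg) hz0.le
  rw [re_mul_log, ← Complex.norm_mul_cos_arg z, ← Complex.norm_mul_sin_arg z, abs_mul, abs_norm,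
    Real.log_mul hz0.ne' hcos.ne']
  linarith

lemma norm_mul_log_le {z : ℂ} (hz : 1 ≤ ‖z‖) {r : ℝ} (hr : ‖z‖ ≤ r) :
    ‖z * Complex.log z‖ ≤ r * (Real.log r + π) := by
  have hlog : ‖Complex.log z‖ ≤ Real.log ‖z‖ + π := by
    refine (Complex.norm_le_abs_re_add_abs_im _).trans ?_
    rw [Complex.log_re, Complex.log_im, abs_of_nonneg (Real.log_nonneg hz)]
    gcongr
    exact Complex.abs_arg_le_pi z
  have hlog0 : 0 ≤ Real.log ‖z‖ := Real.log_nonneg hz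
  have hr0 : 0 ≤ r := (norm_nonneg z).trans hr
  rw [norm_mul]
  calc ‖z‖ * ‖Complex.log z‖ ≤ ‖z‖ * (Real.log ‖z‖ + π) := by gcongr
    _ ≤ r * (Real.log r + π) := by gcongr

lemma integral_re_mul_log_norm_le_add {α : Type*} [MeasurableSpace α] {μ : Measure α} {v : α → ℂ}
    (hv : Integrable v μ) (hlog : Integrable (fun x => v x * Complex.log (v x)) μ) :
    Integrable (fun x => (v x).re * Real.log ‖v x‖) μ ∧
      ∫ x, (v x).re * Real.log ‖v x‖ ∂μ
        ≤ (∫ x, v x * Complex.log (v x) ∂μ).re + π * ∫ x, |(v x).im| ∂μ := by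
  have harg : Integrable (fun x => (v x).im * Complex.arg (v x)) μ :=
    hv.im.mul_bdd (c := π)
      (Complex.measurable_arg.comp_aemeasurable hv.1.aemeasurable).aestronglyMeasurable
      (ae_of_all _ fun x => Complex.abs_arg_le_pi _)
  have hre : Integrable (fun x => (v x * Complex.log (v x)).re) μ := hlog.re
  have heq : (fun x => (v x).re * Real.log ‖v x‖)
      = fun x => (v x * Complex.log (v x)).re + (v x).im * Complex.arg (v x) := by
    funext x
    rw [re_mul_log, sub_add_cancel]
  have hre_eq : ∫ x, (v x * Complex.log (v x)).re ∂μ = (∫ x, v x * Complex.log (v x) ∂μ).re :=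
    Complex.reCLM.integral_comp_comm hlog
  rw [heq, integral_add hre harg, hre_eq, ← integral_const_mul]
  refine ⟨hre.add harg, add_le_add_right (integral_mono harg (hv.im.abs.const_mul π) ?_) _⟩
  intro x
  refine (le_abs_self _).trans ?_
  rw [abs_mul, mul_comm]
  exact mul_le_mul_of_nonneg_right (Complex.abs_arg_le_pi _) (abs_nonneg _)

lemma HasBoundaryValues.integrable_im_of_abs_im_le_re {W G : ℂ → ℂ} {w : ℝ → ℂ}
    (hw : HasBoundaryValues W w) (hW : DifferentiableOn ℂ W upperHalfPlaneSet)
    (hG : DifferentiableOn ℂ G upperHalfPlaneSet)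
    (hGB : ∀ η > 0, ∃ B, ∀ z : ℂ, η ≤ z.im → ‖G z‖ ≤ B)
    (hle : ∀ z ∈ upperHalfPlaneSet, |(W z).im| ≤ (G z).re) :
    Integrable (fun x => (w x).im) ω := by
  have hlim : Tendsto (fun η : ℝ => (G ((1 + η) * I)).re) (𝓝[>] 0) (𝓝 (G I).re) := by
    simpa [Function.comp_def] using
      (Complex.continuous_re.tendsto _).comp (tendsto_comp_add_mul_I hG 0 one_pos)
  have hmem : ∀ {η : ℝ} (x : ℝ), 0 < η → (x + η * I : ℂ) ∈ upperHalfPlaneSet := fun x hη => by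
    simpa [upperHalfPlaneSet] using hη
  have hG_int : ∀ η > (0 : ℝ), Integrable (fun x : ℝ => G (x + η * I)) ω := fun η hη =>
    let ⟨_, hB⟩ := hGB η hη
    integrable_line_standardCauchy hη hG hB
  have hW_int : ∀ η > (0 : ℝ), Integrable (fun x : ℝ => (W (x + η * I)).im) ω := fun η hη =>
    (hG_int η hη).re.mono'
      (Complex.continuous_im.comp (continuous_comp_line hW hη)).aestronglyMeasurable
      (ae_of_all _ fun x => hle _ (hmem x hη))
  refine (integrable_of_tendsto_of_integral_norm_le (l := 𝓝[>] (0 : ℝ))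
    (f := fun (η : ℝ) (x : ℝ) => (W (x + η * I)).im) (C := (G I).re + 1)
    (eventually_nhdsWithin_of_forall hW_int) ?_
    (ae_standardCauchy_iff.2 (hw.mono fun x hx => (Complex.continuous_im.tendsto _).comp hx))).1
  filter_upwards [hlim.eventually_le_const (lt_add_one _), self_mem_nhdsWithin] with η hη' hη
  obtain ⟨B, hB⟩ := hGB η hη
  calc ∫ x : ℝ, ‖(W (x + η * I)).im‖ ∂ω ≤ ∫ x : ℝ, (G (x + η * I)).re ∂ω :=
        integral_mono (hW_int η hη).norm (hG_int η hη).re fun x => hle _ (hmem x hη)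
    _ = (∫ x : ℝ, G (x + η * I) ∂ω).re := Complex.reCLM.integral_comp_comm (hG_int η hη)
    _ ≤ (G I).re + 1 := by rwa [integral_line_standardCauchy hη hG hB]

section RightHalfPlane

variable {W : ℂ → ℂ} {w : ℝ → ℂ} (hw : HasBoundaryValues W w)
  (hW : DifferentiableOn ℂ W upperHalfPlaneSet) (hre : ∀ z ∈ upperHalfPlaneSet, 1 ≤ (W z).re)
include hw hW hre

lemma HasBoundaryValues.integral_re_mul_log_norm_halfPlaneTrunc_le {δ : ℝ} (hδ : 0 < δ)
    (him : Integrable (fun x => (w x).im) ω) :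
    Integrable (fun x => (halfPlaneTrunc δ (w x)).re * Real.log ‖halfPlaneTrunc δ (w x)‖) ω ∧
      ∫ x, (halfPlaneTrunc δ (w x)).re * Real.log ‖halfPlaneTrunc δ (w x)‖ ∂ω
        ≤ ‖W I‖ * (Real.log ‖W I‖ + π) + π * ∫ x, |(w x).im| ∂ω := by
  have hw_re : ∀ᵐ x ∂ω, 1 ≤ (w x).re :=
    hw.mem_of_isClosed (isClosed_le continuous_const Complex.continuous_re) hre
  have hWI : 1 ≤ (W I).re := hre I (by simp [upperHalfPlaneSet])
  obtain ⟨hint, -⟩ := hw.integral_comp_halfPlaneTrunc hW hre hδ (Φ := fun z => z)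
    differentiable_fun_id.differentiableOn
  obtain ⟨hlog_int, hlog_eq⟩ := hw.integral_comp_halfPlaneTrunc hW hre hδ
    (Φ := fun z => z * Complex.log z)
    (differentiable_fun_id.differentiableOn.mul
      (differentiable_fun_id.differentiableOn.clog fun z hz => Or.inl hz))
  obtain ⟨hre_int, hre_le⟩ := integral_re_mul_log_norm_le_add hint hlog_int
  refine ⟨hre_int, hre_le.trans ?_⟩
  rw [hlog_eq]
  gcongr ?_ + π * ?_
  · exact (Complex.re_le_norm _).trans (norm_mul_log_le
      ((one_le_re_halfPlaneTrunc hδ hWI).trans (Complex.re_le_norm _))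
      (norm_halfPlaneTrunc_le hδ hWI))
  · exact integral_mono_ae hint.im.abs him.abs
      (hw_re.mono fun x hx => abs_im_halfPlaneTrunc_le hδ hx)

theorem HasBoundaryValues.integral_re_mul_log_norm_le (him : Integrable (fun x => (w x).im) ω) :
    Integrable (fun x => (w x).re * Real.log ‖w x‖) ω ∧
      ∫ x, (w x).re * Real.log ‖w x‖ ∂ω
        ≤ ‖W I‖ * (Real.log ‖W I‖ + π) + π * ∫ x, |(w x).im| ∂ω := by
  have hw_re : ∀ᵐ x ∂ω, 1 ≤ (w x).re :=
    hw.mem_of_isClosed (isClosed_le continuous_const Complex.continuous_re) hre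
  have hnonneg : ∀ δ : ℝ, 0 < δ → ∀ᵐ x ∂ω,
      0 ≤ (halfPlaneTrunc δ (w x)).re * Real.log ‖halfPlaneTrunc δ (w x)‖ := fun δ hδ =>
    hw_re.mono fun x hx => by
      have h := one_le_re_halfPlaneTrunc hδ hx
      exact mul_nonneg (zero_le_one.trans h) (Real.log_nonneg (h.trans (Complex.re_le_norm _)))
  obtain ⟨hint, hle⟩ := integrable_of_tendsto_of_integral_norm_le (l := 𝓝[>] (0 : ℝ))
    (g := fun x => (w x).re * Real.log ‖w x‖)
    (eventually_nhdsWithin_of_forall fun δ hδ =>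
      (hw.integral_re_mul_log_norm_halfPlaneTrunc_le hW hre hδ him).1)
    (eventually_nhdsWithin_of_forall fun δ hδ => by
      rw [integral_congr_ae ((hnonneg δ hδ).mono fun x hx => Real.norm_of_nonneg hx)]
      exact (hw.integral_re_mul_log_norm_halfPlaneTrunc_le hW hre hδ him).2)
    (hw_re.mono fun x hx => by
      have hne : ‖w x‖ ≠ 0 := by linarith [Complex.re_le_norm (w x)]
      have h := tendsto_halfPlaneTrunc (w x)
      exact ((Complex.continuous_re.tendsto _).comp h).mul (h.norm.log hne))
  exact ⟨hint, (integral_mono hint hint.norm fun x => Real.le_norm_self _).trans hle⟩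

theorem HasBoundaryValues.integrable_im_of_re_mul_log_le {U : ℂ → ℂ}
    (hU : DifferentiableOn ℂ U upperHalfPlaneSet)
    (hWB : ∀ η > 0, ∃ B, ∀ z : ℂ, η ≤ z.im → ‖W z‖ ≤ B)
    (hUB : ∀ η > 0, ∃ B, ∀ z : ℂ, η ≤ z.im → ‖U z‖ ≤ B)
    (hle : ∀ z ∈ upperHalfPlaneSet, (W z).re * Real.log (W z).re ≤ (U z).re) :
    Integrable (fun x => (w x).im) ω := by
  have hW_pos : ∀ z ∈ upperHalfPlaneSet, 0 < (W z).re := fun z hz => one_pos.trans_le (hre z hz)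
  refine hw.integrable_im_of_abs_im_le_re hW
    (G := fun z => 2 * (U z + 2 * W z - W z * Complex.log (W z)))
    (((hU.add (hW.const_mul 2)).sub
      (hW.mul (hW.clog fun z hz => Or.inl (hW_pos z hz)))).const_mul 2)
    (fun η hη => ?_) fun z hz => ?_
  · obtain ⟨B, hB⟩ := hWB η hη
    obtain ⟨B', hB'⟩ := hUB η hη
    refine ⟨2 * (B' + 2 * B + B * (Real.log B + π)), fun z hz => ?_⟩
    have hz1 : 1 ≤ ‖W z‖ := (hre z (hη.trans_le hz)).trans (Complex.re_le_norm _)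
    rw [norm_mul, Complex.norm_ofNat]
    gcongr
    refine (norm_sub_le _ _).trans (add_le_add ((norm_add_le _ _).trans ?_)
      (norm_mul_log_le hz1 (hB z hz)))
    rw [norm_mul, Complex.norm_ofNat]
    gcongr
    exacts [hB' z hz, hB z hz]
  · have h := abs_im_div_two_le (hW_pos z hz)
    have hre_eq : (2 * (U z + 2 * W z - W z * Complex.log (W z))).re
        = 2 * ((U z).re + 2 * (W z).re - (W z * Complex.log (W z)).re) := by simp
    rw [hre_eq]
    linarith [hle z hz]

end RightHalfPlane

/-! ### Lebesgue points and the Poisson kernel -/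

section LebesguePoints

lemma exists_cauchyPDFReal_le (x : ℝ) {γ : ℝ≥0} (hγ : γ ≠ 0) (t : ℝ) :
    ∃ k : ℕ, t ∈ Metric.closedBall x (2 ^ k * γ) ∧
      cauchyPDFReal x γ t ≤ 4 * 2⁻¹ ^ k / (2 * (2 ^ k * γ)) := by
  have hγ0 : (0 : ℝ) < γ := NNReal.coe_pos.2 (pos_iff_ne_zero.2 hγ)
  have hπ : π⁻¹ ≤ 2⁻¹ := by gcongr; linarith [Real.pi_gt_three]
  rcases le_or_gt |t - x| γ with ht | ht
  · refine ⟨0, by simpa [Real.dist_eq] using ht, (cauchyPDFReal_le x γ t).trans ?_⟩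
    calc π⁻¹ * (γ : ℝ)⁻¹ ≤ 2⁻¹ * (γ : ℝ)⁻¹ := by gcongr
      _ ≤ 4 * 2⁻¹ ^ 0 / (2 * (2 ^ 0 * γ)) := by field_simp; norm_num
  · obtain ⟨n, hn, hn'⟩ := exists_nat_pow_near ((one_le_div hγ0).2 ht.le) one_lt_two
    rw [le_div_iff₀ hγ0] at hn
    rw [div_lt_iff₀ hγ0] at hn'
    refine ⟨n + 1, by simpa [Real.dist_eq] using hn'.le, ?_⟩
    have hsq : ((2 ^ n * γ : ℝ)) ^ 2 ≤ |t - x| ^ 2 := by gcongr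
    calc cauchyPDFReal x γ t ≤ 2⁻¹ * (γ : ℝ) * ((2 ^ n * (γ : ℝ)) ^ 2)⁻¹ := by
          rw [cauchyPDFReal, ← sq_abs (t - x)]
          gcongr
          exact le_add_of_le_of_nonneg hsq (sq_nonneg _)
      _ ≤ 4 * 2⁻¹ ^ (n + 1) / (2 * (2 ^ (n + 1) * γ)) := by
          refine le_of_eq ?_
          rw [inv_pow]
          field_simp
          ring

lemma lintegral_cauchyMeasure_le (x : ℝ) {γ : ℝ≥0} (hγ : γ ≠ 0) {h : ℝ → ℝ≥0∞}
    (hh : AEMeasurable h) :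
    ∫⁻ t, h t ∂cauchyMeasure x γ ≤ ∑' k : ℕ, 4 * 2⁻¹ ^ k *
      ((∫⁻ t in Metric.closedBall x (2 ^ k * γ), h t) /
        volume (Metric.closedBall x (2 ^ k * γ))) := by
  have hpdf : ∀ t, cauchyPDF x γ t ≤ ∑' k : ℕ, (Metric.closedBall x (2 ^ k * γ)).indicator
      (fun _ => 4 * 2⁻¹ ^ k / volume (Metric.closedBall x (2 ^ k * γ))) t := fun t => by
    obtain ⟨k, hk, hle⟩ := exists_cauchyPDFReal_le x hγ t
    refine le_trans ?_ (ENNReal.le_tsum k)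
    rw [indicator_of_mem hk, Real.volume_closedBall, cauchyPDF]
    refine (ENNReal.ofReal_le_ofReal hle).trans_eq ?_
    rw [ENNReal.ofReal_div_of_pos (by positivity), ENNReal.ofReal_mul (by norm_num),
      ENNReal.ofReal_pow (by norm_num), ENNReal.ofReal_inv_of_pos two_pos, ENNReal.ofReal_ofNat,
      ENNReal.ofReal_ofNat]
  rw [ProbabilityTheory.cauchyMeasure_of_scale_ne_zero x hγ,
    lintegral_withDensity_eq_lintegral_mul₀ (by fun_prop) hh]
  calc ∫⁻ t, cauchyPDF x γ t * h t
      ≤ ∫⁻ t, ∑' k : ℕ, 4 * 2⁻¹ ^ k / volume (Metric.closedBall x (2 ^ k * γ)) *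
          (Metric.closedBall x (2 ^ k * γ)).indicator h t := by
        refine lintegral_mono fun t => (mul_le_mul_left (hpdf t) (h t)).trans_eq ?_
        rw [← ENNReal.tsum_mul_right]
        refine tsum_congr fun k => ?_
        by_cases ht : t ∈ Metric.closedBall x (2 ^ k * γ) <;> simp [ht]
    _ = _ := by
        rw [lintegral_tsum fun k => (hh.indicator measurableSet_closedBall).const_mul _]
        refine tsum_congr fun k => ?_
        rw [lintegral_const_mul'' _ (hh.indicator measurableSet_closedBall),
          lintegral_indicator measurableSet_closedBall, div_eq_mul_inv, div_eq_mul_inv]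
        ring

variable {E : Type*} [NormedAddCommGroup E]

lemma ae_tendsto_lintegral_enorm_sub_div_closedBall {f : ℝ → E} (hf : Integrable f) :
    ∀ᵐ x, Tendsto (fun r : ℝ => (∫⁻ t in Metric.closedBall x r, ‖f t - f x‖ₑ) /
      volume (Metric.closedBall x r)) (𝓝[>] 0) (𝓝 0) := by
  have hdiff := (IsUnifLocDoublingMeasure.vitaliFamily (volume : Measure ℝ) 1)
    |>.ae_tendsto_lintegral_enorm_sub_div hf.locallyIntegrable
  filter_upwards [hdiff] with x hx
  refine hx.comp (IsUnifLocDoublingMeasure.tendsto_closedBall_filterAt volume (fun _ => x)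
    (fun r => r) tendsto_id ?_)
  filter_upwards [self_mem_nhdsWithin] with r hr
  simpa using (mem_Ioi.1 hr).le

lemma exists_lintegral_enorm_sub_div_closedBall_le {f : ℝ → E} (hf : Integrable f) {x : ℝ}
    (hx : Tendsto (fun r : ℝ => (∫⁻ t in Metric.closedBall x r, ‖f t - f x‖ₑ) /
      volume (Metric.closedBall x r)) (𝓝[>] 0) (𝓝 0)) :
    ∃ C ≠ ∞, ∀ r > 0, (∫⁻ t in Metric.closedBall x r, ‖f t - f x‖ₑ) /
      volume (Metric.closedBall x r) ≤ C := by
  obtain ⟨δ, hδ, hδ'⟩ := mem_nhdsGT_iff_exists_Ioo_subset.1 (hx.eventually_le_const one_pos)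
  have hδ0 : volume (Metric.closedBall x δ) ≠ 0 := (Metric.measure_closedBall_pos _ _ hδ).ne'
  refine ⟨1 + ((∫⁻ t, ‖f t‖ₑ) / volume (Metric.closedBall x δ) + ‖f x‖ₑ), ?_, fun r hr => ?_⟩
  · exact ENNReal.add_ne_top.2 ⟨ENNReal.one_ne_top, ENNReal.add_ne_top.2
      ⟨ENNReal.div_ne_top hf.2.ne hδ0, enorm_ne_top⟩⟩
  rcases lt_or_ge r δ with hrδ | hrδ
  · exact (hδ' ⟨hr, hrδ⟩ : _ ≤ (1 : ℝ≥0∞)).trans le_self_add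
  have hr0 : volume (Metric.closedBall x r) ≠ 0 := (Metric.measure_closedBall_pos _ _ hr).ne'
  calc (∫⁻ t in Metric.closedBall x r, ‖f t - f x‖ₑ) / volume (Metric.closedBall x r)
      ≤ (∫⁻ t in Metric.closedBall x r, (‖f t‖ₑ + ‖f x‖ₑ)) / volume (Metric.closedBall x r) := by
        gcongr
        exact enorm_sub_le
    _ = (∫⁻ t in Metric.closedBall x r, ‖f t‖ₑ) / volume (Metric.closedBall x r) + ‖f x‖ₑ := by
        rw [lintegral_add_right _ measurable_const, setLIntegral_const, ENNReal.add_div,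
          ENNReal.mul_div_cancel_right hr0 measure_closedBall_lt_top.ne]
    _ ≤ (∫⁻ t, ‖f t‖ₑ) / volume (Metric.closedBall x δ) + ‖f x‖ₑ := by
        gcongr
        exact Measure.restrict_le_self
    _ ≤ _ := le_add_self

theorem ae_tendsto_lintegral_enorm_sub_cauchyMeasure {f : ℝ → E} (hf : Integrable f) :
    ∀ᵐ x, Tendsto (fun y : ℝ => ∫⁻ t, ‖f t - f x‖ₑ ∂cauchyMeasure x y.toNNReal)
      (𝓝[>] 0) (𝓝 0) := by
  filter_upwards [ae_tendsto_lintegral_enorm_sub_div_closedBall hf] with x hx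
  obtain ⟨C, hC, hle⟩ := exists_lintegral_enorm_sub_div_closedBall_le hf hx
  set A : ℝ → ℝ≥0∞ := fun r => (∫⁻ t in Metric.closedBall x r, ‖f t - f x‖ₑ) /
    volume (Metric.closedBall x r)
  have hscale : ∀ k : ℕ, Tendsto (fun y : ℝ => (2 : ℝ) ^ k * y) (𝓝[>] 0) (𝓝[>] 0) := fun k => by
    refine tendsto_nhdsWithin_iff.2 ⟨?_, ?_⟩
    · simpa using ((continuous_const_mul ((2 : ℝ) ^ k)).tendsto 0).mono_left nhdsWithin_le_nhds
    · exact eventually_nhdsWithin_of_forall fun y hy =>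
        mem_Ioi.2 (mul_pos (pow_pos two_pos k) (mem_Ioi.1 hy))
  have hsum : Tendsto (fun y : ℝ => ∑' k : ℕ, 4 * 2⁻¹ ^ k * A (2 ^ k * y)) (𝓝[>] 0) (𝓝 0) := by
    simp_rw [← lintegral_count]
    rw [← lintegral_zero (μ := Measure.count (α := ℕ))]
    refine tendsto_lintegral_filter_of_dominated_convergence (fun k : ℕ => 4 * 2⁻¹ ^ k * C)
      (.of_forall fun y => measurable_from_nat) ?_ ?_ (ae_of_all _ fun k => ?_)
    · filter_upwards [self_mem_nhdsWithin] with y hy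
      refine ae_of_all _ fun k => ?_
      gcongr
      exact hle _ (mul_pos (by positivity) hy)
    · rw [lintegral_count, ENNReal.tsum_mul_right, ENNReal.tsum_mul_left, ENNReal.tsum_geometric,
        ENNReal.one_sub_inv_two, inv_inv]
      exact ENNReal.mul_ne_top (ENNReal.mul_ne_top (by norm_num) (by norm_num)) hC
    · simpa using ENNReal.Tendsto.const_mul (hx.comp (hscale k)) (Or.inr (by finiteness))
  refine tendsto_of_tendsto_of_tendsto_of_le_of_le' tendsto_const_nhds hsum
    (.of_forall fun _ => zero_le) ?_
  filter_upwards [self_mem_nhdsWithin] with y hy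
  have h := lintegral_cauchyMeasure_le x (Real.toNNReal_pos.2 hy).ne'
    (hf.1.sub (aestronglyMeasurable_const (b := f x))).enorm
  rwa [Real.coe_toNNReal y (le_of_lt hy)] at h

theorem ae_tendsto_integral_cauchyMeasure [NormedSpace ℝ E] [CompleteSpace E] {f : ℝ → E}
    (hf : Integrable f) :
    ∀ᵐ x, Tendsto (fun y : ℝ => ∫ t, f t ∂cauchyMeasure x y.toNNReal) (𝓝[>] 0) (𝓝 (f x)) := by
  filter_upwards [ae_tendsto_lintegral_enorm_sub_cauchyMeasure hf] with x hx
  rw [tendsto_iff_edist_tendsto_0]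
  refine tendsto_of_tendsto_of_tendsto_of_le_of_le' tendsto_const_nhds hx
    (.of_forall fun _ => zero_le) ?_
  filter_upwards [self_mem_nhdsWithin] with y hy
  have hint := integrable_cauchyMeasure hf x (Real.toNNReal_pos.2 hy).ne'
  have heq : ∫ t, (f t - f x) ∂cauchyMeasure x y.toNNReal
      = ∫ t, f t ∂cauchyMeasure x y.toNNReal - f x := by
    rw [integral_sub hint (integrable_const _), integral_const, probReal_univ, one_smul]
  rw [edist_eq_enorm_sub, ← heq]
  exact enorm_integral_le_lintegral_enorm _

end LebesguePoints

/-! ### The Cauchy integral of a density on the line -/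

/-- The Cauchy integral `z ↦ (πi)⁻¹ ∫ f(x)/(x - z) dx` on the upper half-plane, normalized so that
its real part is the Poisson integral of `f`; its imaginary part is then minus the conjugate Poisson
integral. -/
def halfPlaneCauchy (f : ℝ → ℝ) (z : ℂ) : ℂ := (π * I)⁻¹ * ∫ x : ℝ, (f x : ℂ) / (x - z)

section HalfPlaneCauchy

variable {f : ℝ → ℝ}

lemma im_le_norm_ofReal_sub (x : ℝ) (z : ℂ) : z.im ≤ ‖(x : ℂ) - z‖ := by
  have h := Complex.abs_im_le_norm (x - z)
  rw [Complex.sub_im, Complex.ofReal_im, zero_sub, abs_neg] at h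
  exact (le_abs_self _).trans h

lemma ofReal_sub_ne_zero (x : ℝ) {z : ℂ} (hz : 0 < z.im) : (x : ℂ) - z ≠ 0 :=
  norm_pos_iff.1 (hz.trans_le (im_le_norm_ofReal_sub x z))

lemma norm_div_ofReal_sub_le {η : ℝ} (hη : 0 < η) {z : ℂ} (hz : η ≤ z.im) (x : ℝ) :
    ‖(f x : ℂ) / (x - z)‖ ≤ |f x| / η := by
  rw [norm_div, Complex.norm_real, Real.norm_eq_abs]
  gcongr
  exact hz.trans (im_le_norm_ofReal_sub x z)

lemma integrable_div_ofReal_sub (hf : Integrable f) {z : ℂ} (hz : 0 < z.im) :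
    Integrable fun x : ℝ => (f x : ℂ) / (x - z) :=
  (hf.abs.div_const _).mono'
    (hf.ofReal.aestronglyMeasurable.div₀ (by fun_prop : Continuous _).aestronglyMeasurable)
    (ae_of_all _ (norm_div_ofReal_sub_le hz le_rfl))

lemma differentiableOn_halfPlaneCauchy (hf : Integrable f) :
    DifferentiableOn ℂ (halfPlaneCauchy f) upperHalfPlaneSet := by
  intro z (hz : 0 < z.im)
  refine DifferentiableWithinAt.const_mul ?_ _
  have hnhds : {w : ℂ | z.im / 2 < w.im} ∈ 𝓝 z :=
    (isOpen_lt continuous_const Complex.continuous_im).mem_nhds (half_lt_self hz)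
  refine (hasDerivAt_integral_of_dominated_loc_of_deriv_le (μ := volume) (𝕜 := ℂ)
    (F' := fun w (x : ℝ) => (f x : ℂ) / (x - w) ^ 2)
    (bound := fun x => |f x| / (z.im / 2) ^ 2) hnhds ?_ (integrable_div_ofReal_sub hf hz)
    ?_ ?_ (hf.abs.div_const _) ?_).2.differentiableAt.differentiableWithinAt
  · filter_upwards [hnhds] with w hw
    exact (integrable_div_ofReal_sub hf ((half_pos hz).trans hw)).aestronglyMeasurable
  · exact hf.ofReal.aestronglyMeasurable.div₀ (by fun_prop : Continuous _).aestronglyMeasurable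
  · refine ae_of_all _ fun x w hw => ?_
    rw [norm_div, norm_pow, Complex.norm_real, Real.norm_eq_abs]
    gcongr
    exact (le_of_lt hw).trans (im_le_norm_ofReal_sub x w)
  · refine ae_of_all _ fun x w hw => ?_
    have hne := ofReal_sub_ne_zero x ((half_pos hz).trans hw)
    simpa [div_eq_mul_inv] using
      (((hasDerivAt_id w).const_sub (x : ℂ)).inv hne).const_mul (f x : ℂ)

lemma norm_halfPlaneCauchy_le (hf : Integrable f) {η : ℝ} (hη : 0 < η) {z : ℂ} (hz : η ≤ z.im) :
    ‖halfPlaneCauchy f z‖ ≤ π⁻¹ * ((∫ x, |f x|) / η) := by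
  rw [halfPlaneCauchy, norm_mul, norm_inv, norm_mul, Complex.norm_I, mul_one, Complex.norm_real,
    Real.norm_of_nonneg Real.pi_pos.le, ← integral_div]
  gcongr
  exact norm_integral_le_of_norm_le (hf.abs.div_const η)
    (ae_of_all _ (norm_div_ofReal_sub_le hη hz))

lemma halfPlaneCauchy_eq_smul_integral (f : ℝ → ℝ) (z : ℂ) :
    halfPlaneCauchy f z = π⁻¹ • ∫ x : ℝ, -I * ((f x : ℂ) / (x - z)) := by
  rw [halfPlaneCauchy, integral_const_mul, mul_inv, Complex.inv_I, Complex.real_smul,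
    Complex.ofReal_inv, mul_assoc]

lemma re_neg_I_mul_div_ofReal_sub (c x : ℝ) (z : ℂ) :
    (-I * ((c : ℂ) / (x - z))).re = z.im / ((x - z.re) ^ 2 + z.im ^ 2) * c := by
  simp only [neg_mul, Complex.neg_re, Complex.mul_re, Complex.I_re, zero_mul, Complex.I_im,
    Complex.div_im, Complex.ofReal_im, Complex.sub_re, Complex.ofReal_re, Complex.normSq_apply,
    Complex.sub_im]
  ring

lemma im_neg_I_mul_div_ofReal_sub (c x : ℝ) (z : ℂ) :
    (-I * ((c : ℂ) / (x - z))).im = -((x - z.re) / ((x - z.re) ^ 2 + z.im ^ 2) * c) := by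
  simp only [neg_mul, Complex.neg_im, Complex.mul_im, Complex.I_re, zero_mul, Complex.I_im,
    Complex.div_re, Complex.ofReal_re, Complex.sub_re, Complex.normSq_apply, Complex.sub_im,
    Complex.ofReal_im]
  ring

lemma re_halfPlaneCauchy (hf : Integrable f) {z : ℂ} (hz : 0 < z.im) :
    (halfPlaneCauchy f z).re = ∫ x, f x ∂cauchyMeasure z.re z.im.toNNReal := by
  have h := Complex.reCLM.integral_comp_comm ((integrable_div_ofReal_sub hf hz).const_mul (-I))
  simp only [Complex.reCLM_apply, re_neg_I_mul_div_ofReal_sub] at h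
  rw [halfPlaneCauchy_eq_smul_integral, Complex.smul_re, ← h, smul_eq_mul,
    integral_cauchyMeasure _ (Real.toNNReal_pos.2 hz).ne', ← integral_const_mul]
  refine integral_congr_ae (ae_of_all _ fun x => ?_)
  simp only [cauchyPDFReal, Real.coe_toNNReal _ hz.le, smul_eq_mul]
  ring

lemma im_halfPlaneCauchy (hf : Integrable f) {z : ℂ} (hz : 0 < z.im) :
    (halfPlaneCauchy f z).im
      = -(π⁻¹ * ∫ x, (x - z.re) / ((x - z.re) ^ 2 + z.im ^ 2) * f x) := by
  have h := Complex.imCLM.integral_comp_comm ((integrable_div_ofReal_sub hf hz).const_mul (-I))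
  simp only [Complex.imCLM_apply, im_neg_I_mul_div_ofReal_sub, integral_neg] at h
  rw [halfPlaneCauchy_eq_smul_integral, Complex.smul_im, ← h, smul_eq_mul, mul_neg]

lemma one_le_re_one_add_halfPlaneCauchy (hf : Integrable f) (hf0 : 0 ≤ f) :
    ∀ z ∈ upperHalfPlaneSet, 1 ≤ (1 + halfPlaneCauchy f z).re := fun z hz => by
  rw [Complex.add_re, Complex.one_re, re_halfPlaneCauchy hf hz]
  exact le_add_of_nonneg_right (integral_nonneg hf0)

lemma exists_norm_one_add_halfPlaneCauchy_le (hf : Integrable f) :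
    ∀ η > 0, ∃ B, ∀ z : ℂ, η ≤ z.im → ‖1 + halfPlaneCauchy f z‖ ≤ B := fun _ hη =>
  ⟨_, fun _ hz => norm_add_le_of_le norm_one.le (norm_halfPlaneCauchy_le hf hη hz)⟩

theorem exists_hasBoundaryValues_one_add_halfPlaneCauchy (hf : Integrable f) (hf0 : 0 ≤ f) :
    ∃ w : ℝ → ℂ, HasBoundaryValues (fun z => 1 + halfPlaneCauchy f z) w ∧
      ∀ᵐ x, (w x).re = 1 + f x := by
  have hre : HasBoundaryValues (fun z => (1 + halfPlaneCauchy f z).re) fun x => 1 + f x := by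
    filter_upwards [ae_tendsto_integral_cauchyMeasure hf] with x hx
    refine (hx.const_add 1).congr' (eventually_nhdsWithin_of_forall fun y hy => ?_)
    simp [re_halfPlaneCauchy hf (z := x + y * I) (by simpa using hy)]
  obtain ⟨w, hw⟩ := exists_hasBoundaryValues_of_tendsto_re
    ((differentiableOn_halfPlaneCauchy hf).const_add 1)
    (one_le_re_one_add_halfPlaneCauchy hf hf0) hre
  refine ⟨w, hw, ?_⟩
  filter_upwards [hw, hre] with x hx hx'
  exact tendsto_nhds_unique ((Complex.continuous_re.tendsto _).comp hx) hx'

/-- The Orlicz function `t ↦ (1 + t) log (1 + t)` of the Zygmund class. -/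
def zygmundFun (t : ℝ) : ℝ := (1 + t) * Real.log (1 + t)

lemma zygmundFun_nonneg {t : ℝ} (ht : 0 ≤ t) : 0 ≤ zygmundFun t :=
  mul_nonneg (by positivity) (Real.log_nonneg (by linarith))

lemma measurable_zygmundFun : Measurable zygmundFun := by
  unfold zygmundFun
  fun_prop

lemma re_mul_log_re_one_add_halfPlaneCauchy_le (hf : Integrable f) (hf0 : 0 ≤ f)
    (hF : Integrable fun x => zygmundFun (f x)) {z : ℂ} (hz : z ∈ upperHalfPlaneSet) :
    (1 + halfPlaneCauchy f z).re * Real.log (1 + halfPlaneCauchy f z).re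
      ≤ (halfPlaneCauchy (fun x => zygmundFun (f x)) z).re := by
  have hγ : z.im.toNNReal ≠ 0 := (Real.toNNReal_pos.2 hz).ne'
  have hmean : (1 + halfPlaneCauchy f z).re
      = ∫ x, (1 + f x) ∂cauchyMeasure z.re z.im.toNNReal := by
    rw [integral_add (integrable_const _) (integrable_cauchyMeasure hf _ hγ), integral_const,
      probReal_univ, one_smul, Complex.add_re, Complex.one_re, re_halfPlaneCauchy hf hz]
  rw [hmean, re_halfPlaneCauchy hF hz]
  exact Real.convexOn_mul_log.map_integral_le Real.continuous_mul_log.continuousOn isClosed_Ici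
    (ae_of_all _ fun x => add_nonneg zero_le_one (hf0 x))
    ((integrable_const _).add (integrable_cauchyMeasure hf _ hγ))
    (integrable_cauchyMeasure hF _ hγ)

/-- **Zygmund's theorem** on conjugate functions, for a nonnegative density on the line. -/
theorem integrable_im_boundary_of_integrable_zygmundFun (hf : Integrable f) (hf0 : 0 ≤ f)
    (hF : Integrable fun x => zygmundFun (f x)) {w : ℝ → ℂ}
    (hw : HasBoundaryValues (fun z => 1 + halfPlaneCauchy f z) w) :
    Integrable (fun x => (w x).im) ω :=
  hw.integrable_im_of_re_mul_log_le ((differentiableOn_halfPlaneCauchy hf).const_add 1)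
    (one_le_re_one_add_halfPlaneCauchy hf hf0) (differentiableOn_halfPlaneCauchy hF)
    (exists_norm_one_add_halfPlaneCauchy_le hf)
    (fun _ hη => ⟨_, fun _ hz => norm_halfPlaneCauchy_le hF hη hz⟩)
    fun _ hz => re_mul_log_re_one_add_halfPlaneCauchy_le hf hf0 hF hz

end HalfPlaneCauchy

/-! ### The truncated Hilbert transform -/

section TruncHilbert

variable {E F : Type*} [NormedAddCommGroup E] [NormedSpace ℝ E] [NormedAddCommGroup F]
  [NormedSpace ℝ F]

/-- The truncated Hilbert transform `π⁻¹ ∫_{ε ≤ |x - t|} f(x)/(x - t) dx` of a vector-valued `f`.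
The variable `ε` comes last because the principal value is its limit as `ε → 0⁺`. -/
def truncHilbert (f : ℝ → E) (t ε : ℝ) : E :=
  π⁻¹ • ∫ x in {x | ε ≤ |x - t|}, (x - t)⁻¹ • f x

lemma measurableSet_le_abs_sub (t ε : ℝ) : MeasurableSet {x | ε ≤ |x - t|} :=
  measurableSet_le measurable_const (by fun_prop)

lemma integrableOn_inv_sub_smul {f : ℝ → E} (hf : Integrable f) (t : ℝ) {ε : ℝ} (hε : 0 < ε) :
    IntegrableOn (fun x => (x - t)⁻¹ • f x) {x | ε ≤ |x - t|} := by
  refine (hf.norm.const_mul ε⁻¹).integrableOn.mono' ?_ ?_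
  · exact ((by fun_prop : Measurable fun x : ℝ => (x - t)⁻¹).aestronglyMeasurable.smul
      hf.1).restrict
  · filter_upwards [ae_restrict_mem (measurableSet_le_abs_sub t ε)] with x hx
    rw [norm_smul, norm_inv, Real.norm_eq_abs]
    gcongr

lemma truncHilbert_clm_comp [CompleteSpace E] [CompleteSpace F] (L : E →L[ℝ] F) {f : ℝ → E}
    (hf : Integrable f) (t : ℝ) {ε : ℝ} (hε : 0 < ε) :
    truncHilbert (fun x => L (f x)) t ε = L (truncHilbert f t ε) := by
  simp only [truncHilbert, ← map_smul]
  rw [L.integral_comp_comm (integrableOn_inv_sub_smul hf t hε), map_smul]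

lemma truncHilbert_comp_neg (f : ℝ → E) (t ε : ℝ) :
    truncHilbert (fun x => f (-x)) t ε = -truncHilbert f (-t) ε := by
  rw [truncHilbert, truncHilbert, ← integral_indicator (measurableSet_le_abs_sub _ _),
    ← integral_indicator (measurableSet_le_abs_sub _ _), ← smul_neg, ← integral_neg,
    ← integral_neg_eq_self]
  congr 2 with x
  have hx : |-x - t| = |x - -t| := by
    rw [← abs_neg, neg_sub, sub_neg_eq_add, sub_neg_eq_add, add_comm]
  simp only [indicator_apply, mem_ofPred_eq, hx, neg_neg]
  split_ifs
  · rw [← neg_smul, ← inv_neg]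
    congr 2
    ring
  · rw [neg_zero]

end TruncHilbert

/-- The truncated Hilbert kernel at scale `ε` minus the conjugate Poisson kernel at height `ε`. -/
def hilbertKernelDefect (ε u : ℝ) : ℝ :=
  π⁻¹ * ({u | ε ≤ |u|}.indicator (fun u => u⁻¹) u - u / (u ^ 2 + ε ^ 2))

lemma measurable_hilbertKernelDefect (ε : ℝ) : Measurable (hilbertKernelDefect ε) :=
  ((measurable_inv.indicator (measurableSet_le measurable_const (by fun_prop))).sub
    (by fun_prop)).const_mul _

lemma hilbertKernelDefect_neg (ε u : ℝ) :
    hilbertKernelDefect ε (-u) = -hilbertKernelDefect ε u := by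
  simp only [hilbertKernelDefect, indicator_apply, mem_ofPred_eq, abs_neg]
  split_ifs <;> ring

lemma abs_hilbertKernelDefect_le {ε : ℝ} (hε : 0 < ε) (x t : ℝ) :
    |hilbertKernelDefect ε (t - x)| ≤ cauchyPDFReal x ε.toNNReal t := by
  rw [hilbertKernelDefect, cauchyPDFReal, Real.coe_toNNReal ε hε.le, abs_mul,
    abs_of_pos (by positivity : 0 < π⁻¹), mul_assoc]
  gcongr
  generalize t - x = u
  by_cases hu : ε ≤ |u|
  · have hu0 : u ≠ 0 := abs_pos.1 (hε.trans_le hu)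
    have heq : u⁻¹ - u / (u ^ 2 + ε ^ 2) = ε ^ 2 / (u * (u ^ 2 + ε ^ 2)) := by
      field_simp
      ring
    rw [indicator_of_mem (s := {u : ℝ | ε ≤ |u|}) hu, heq, abs_div, abs_mul,
      abs_of_pos (by positivity : 0 < u ^ 2 + ε ^ 2), abs_of_pos (by positivity : 0 < ε ^ 2),
      ← div_eq_mul_inv, div_le_div_iff₀ (by positivity) (by positivity)]
    nlinarith [mul_le_mul_of_nonneg_left hu (by positivity : 0 ≤ ε * (u ^ 2 + ε ^ 2))]
  · rw [indicator_of_notMem (s := {u : ℝ | ε ≤ |u|}) hu, zero_sub, abs_neg, abs_div,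
      abs_of_pos (by positivity : 0 < u ^ 2 + ε ^ 2), div_eq_mul_inv]
    gcongr
    exact (not_le.1 hu).le

lemma integrable_hilbertKernelDefect {ε : ℝ} (hε : 0 < ε) (x : ℝ) :
    Integrable fun t => hilbertKernelDefect ε (t - x) :=
  (ProbabilityTheory.integrable_cauchyPDFReal x).mono'
    ((measurable_hilbertKernelDefect ε).comp (by fun_prop)).aestronglyMeasurable
    (ae_of_all _ (abs_hilbertKernelDefect_le hε x))

lemma integral_hilbertKernelDefect (ε x : ℝ) : ∫ t, hilbertKernelDefect ε (t - x) = 0 := by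
  have hodd := integral_neg_eq_self (hilbertKernelDefect ε) volume
  simp only [hilbertKernelDefect_neg, integral_neg] at hodd
  rw [integral_sub_right_eq_self]
  linarith

section ConjugatePoisson

variable {f : ℝ → ℝ}

lemma truncHilbert_add_im_halfPlaneCauchy (hf : Integrable f) (x : ℝ) {ε : ℝ} (hε : 0 < ε) :
    Integrable (fun t => hilbertKernelDefect ε (t - x) * f t) ∧
      truncHilbert f x ε + (halfPlaneCauchy f (x + ε * I)).im
        = ∫ t, hilbertKernelDefect ε (t - x) * f t := by
  have hz : 0 < (x + ε * I : ℂ).im := by simpa using hε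
  have hconj : Integrable fun t => (t - x) / ((t - x) ^ 2 + ε ^ 2) * f t := by
    have h := ((integrable_div_ofReal_sub hf hz).const_mul (-I)).im.neg
    refine h.congr (ae_of_all _ fun t => ?_)
    rw [Pi.neg_apply, RCLike.im_to_complex, im_neg_I_mul_div_ofReal_sub]
    simp
  have htrunc := (integrableOn_inv_sub_smul hf x hε).integrable_indicator
    (measurableSet_le_abs_sub x ε)
  have heq : ∀ t, π⁻¹ * ({t | ε ≤ |t - x|}.indicator (fun t => (t - x)⁻¹ • f t) t
      - (t - x) / ((t - x) ^ 2 + ε ^ 2) * f t) = hilbertKernelDefect ε (t - x) * f t := fun t => by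
    simp only [hilbertKernelDefect, indicator_apply, mem_ofPred_eq, smul_eq_mul]
    split_ifs <;> ring
  simp only [← heq]
  refine ⟨(htrunc.sub hconj).const_mul _, ?_⟩
  rw [integral_const_mul, integral_sub htrunc hconj,
    integral_indicator (measurableSet_le_abs_sub x ε), im_halfPlaneCauchy hf hz, truncHilbert]
  simp [mul_add, sub_eq_add_neg]

lemma enorm_truncHilbert_add_im_halfPlaneCauchy_le (hf : Integrable f) (x : ℝ) {ε : ℝ}
    (hε : 0 < ε) :
    ‖truncHilbert f x ε + (halfPlaneCauchy f (x + ε * I)).im‖ₑ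
      ≤ ∫⁻ t, ‖f t - f x‖ₑ ∂cauchyMeasure x ε.toNNReal := by
  obtain ⟨hint, heq⟩ := truncHilbert_add_im_halfPlaneCauchy hf x hε
  have hmean : ∫ t, hilbertKernelDefect ε (t - x) * (f t - f x)
      = ∫ t, hilbertKernelDefect ε (t - x) * f t := by
    simp only [mul_sub]
    rw [integral_sub hint ((integrable_hilbertKernelDefect hε x).mul_const _), integral_mul_const,
      integral_hilbertKernelDefect, zero_mul, sub_zero]
  have hmeas : AEMeasurable fun t => ‖f t - f x‖ₑ := (hf.1.sub aestronglyMeasurable_const).enorm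
  rw [heq, ← hmean, ProbabilityTheory.cauchyMeasure_of_scale_ne_zero x (Real.toNNReal_pos.2 hε).ne',
    lintegral_withDensity_eq_lintegral_mul₀ (by fun_prop) hmeas]
  refine (enorm_integral_le_lintegral_enorm _).trans (lintegral_mono fun t => ?_)
  rw [enorm_mul, Pi.mul_apply, cauchyPDF, Real.enorm_eq_ofReal_abs]
  gcongr
  exact abs_hilbertKernelDefect_le hε x t

theorem ae_tendsto_truncHilbert_neg_im (hf : Integrable f) {w : ℝ → ℂ}
    (hw : HasBoundaryValues (fun z => 1 + halfPlaneCauchy f z) w) :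
    ∀ᵐ x, Tendsto (truncHilbert f x) (𝓝[>] 0) (𝓝 (-(w x).im)) := by
  filter_upwards [hw, ae_tendsto_lintegral_enorm_sub_cauchyMeasure hf] with x hx hL
  have him : Tendsto (fun ε : ℝ => (halfPlaneCauchy f (x + ε * I)).im) (𝓝[>] 0) (𝓝 (w x).im) := by
    simpa [Function.comp_def] using (Complex.continuous_im.tendsto _).comp hx
  have hsum : Tendsto (fun ε : ℝ => truncHilbert f x ε + (halfPlaneCauchy f (x + ε * I)).im)
      (𝓝[>] 0) (𝓝 0) := by
    rw [tendsto_zero_iff_enorm_tendsto_zero]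
    exact tendsto_of_tendsto_of_tendsto_of_le_of_le' tendsto_const_nhds hL
      (.of_forall fun _ => zero_le) (eventually_nhdsWithin_of_forall fun ε hε =>
        enorm_truncHilbert_add_im_halfPlaneCauchy_le hf x hε)
  simpa using hsum.sub him

end ConjugatePoisson

/-! ### The Hilbert transform -/

section HilbertTransform

variable {E F : Type*} [NormedAddCommGroup E] [NormedSpace ℝ E] [NormedAddCommGroup F]
  [NormedSpace ℝ F]

/-- The Hilbert transform of `f` on the line, as a principal value. Where the principal value does
not exist, `limUnder` gives a junk value. -/
def hilbertTransform (f : ℝ → E) (t : ℝ) : E := limUnder (𝓝[>] 0) (truncHilbert f t)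

lemma truncHilbert_sub {f g : ℝ → E} (hf : Integrable f) (hg : Integrable g) (t : ℝ) {ε : ℝ}
    (hε : 0 < ε) :
    truncHilbert (fun x => f x - g x) t ε = truncHilbert f t ε - truncHilbert g t ε := by
  simp only [truncHilbert, smul_sub]
  rw [integral_sub (integrableOn_inv_sub_smul hf t hε) (integrableOn_inv_sub_smul hg t hε),
    smul_sub]

lemma ae_tendsto_truncHilbert_of_nonneg {f : ℝ → ℝ} (hf : Integrable f) (hf0 : 0 ≤ f) :
    ∀ᵐ t, Tendsto (truncHilbert f t) (𝓝[>] 0) (𝓝 (hilbertTransform f t)) := by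
  obtain ⟨w, hw, -⟩ := exists_hasBoundaryValues_one_add_halfPlaneCauchy hf hf0
  filter_upwards [ae_tendsto_truncHilbert_neg_im hf hw] with t ht
  exact tendsto_nhds_limUnder ⟨_, ht⟩

lemma ae_exists_tendsto_truncHilbert_real {f : ℝ → ℝ} (hf : Integrable f) :
    ∀ᵐ t, ∃ y, Tendsto (truncHilbert f t) (𝓝[>] 0) (𝓝 y) := by
  filter_upwards [ae_tendsto_truncHilbert_of_nonneg hf.pos_part fun _ => le_max_right _ _,
    ae_tendsto_truncHilbert_of_nonneg hf.neg_part fun _ => le_max_right _ _] with t hpos hneg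
  refine ⟨_, (hpos.sub hneg).congr' (eventually_nhdsWithin_of_forall fun ε hε => ?_)⟩
  rw [← truncHilbert_sub hf.pos_part hf.neg_part t hε]
  congr 1 with x
  exact max_zero_sub_max_neg_zero_eq_self (f x)

lemma hilbertTransform_eq_integral_of_eq_zero {f : ℝ → E} {t δ : ℝ} (hδ : 0 < δ)
    (hf : ∀ x, |x - t| < δ → f x = 0) :
    hilbertTransform f t = π⁻¹ • ∫ x, (x - t)⁻¹ • f x := by
  refine (tendsto_const_nhds.congr' ?_).limUnder_eq
  filter_upwards [Ioc_mem_nhdsGT hδ] with ε hε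
  rw [truncHilbert, setIntegral_eq_integral_of_forall_compl_eq_zero fun x hx => ?_]
  rw [hf x ((not_le.1 hx).trans_le hε.2), smul_zero]

variable [FiniteDimensional ℝ E]

/-- The principal value exists almost everywhere: in coordinates, the real positive and negative
parts are boundary values of Cauchy integrals. -/
theorem ae_tendsto_truncHilbert {f : ℝ → E} (hf : Integrable f) :
    ∀ᵐ t, Tendsto (truncHilbert f t) (𝓝[>] 0) (𝓝 (hilbertTransform f t)) := by
  have := FiniteDimensional.complete ℝ E
  let φ := (Module.finBasis ℝ E).equivFunL
  let coord (i : Fin (Module.finrank ℝ E)) : E →L[ℝ] ℝ :=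
    (ContinuousLinearMap.proj i).comp φ.toContinuousLinearMap
  have hcoord : ∀ i, ∀ᵐ t, ∃ y, Tendsto (truncHilbert (fun x => coord i (f x)) t) (𝓝[>] 0) (𝓝 y) :=
    fun i => ae_exists_tendsto_truncHilbert_real ((coord i).integrable_comp hf)
  filter_upwards [ae_all_iff.2 hcoord] with t ht
  choose y hy using ht
  have hφ : Tendsto (fun ε => φ (truncHilbert f t ε)) (𝓝[>] 0) (𝓝 y) := by
    refine tendsto_pi_nhds.2 fun i => (hy i).congr' ?_
    exact eventually_nhdsWithin_of_forall fun ε hε => truncHilbert_clm_comp (coord i) hf t hε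
  refine tendsto_nhds_limUnder ⟨φ.symm y, ?_⟩
  simpa [Function.comp_def] using (φ.symm.continuous.tendsto y).comp hφ

lemma hilbertTransform_sub_ae {f g : ℝ → E} (hf : Integrable f) (hg : Integrable g) :
    hilbertTransform (fun x => f x - g x)
      =ᵐ[volume] fun t => hilbertTransform f t - hilbertTransform g t := by
  filter_upwards [ae_tendsto_truncHilbert hf, ae_tendsto_truncHilbert hg] with t hft hgt
  refine Tendsto.limUnder_eq ((hft.sub hgt).congr' ?_)
  exact eventually_nhdsWithin_of_forall fun ε hε => (truncHilbert_sub hf hg t hε).symm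

lemma hilbertTransform_clm_comp_ae [CompleteSpace F] (L : E →L[ℝ] F) {f : ℝ → E}
    (hf : Integrable f) :
    hilbertTransform (fun x => L (f x)) =ᵐ[volume] fun t => L (hilbertTransform f t) := by
  have := FiniteDimensional.complete ℝ E
  filter_upwards [ae_tendsto_truncHilbert hf] with t ht
  refine Tendsto.limUnder_eq (((L.continuous.tendsto _).comp ht).congr' ?_)
  exact eventually_nhdsWithin_of_forall fun ε hε => (truncHilbert_clm_comp L hf t hε).symm

lemma hilbertTransform_comp_neg_ae {f : ℝ → E} (hf : Integrable f) :
    hilbertTransform (fun x => f (-x)) =ᵐ[volume] fun t => -hilbertTransform f (-t) := by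
  filter_upwards [(Measure.measurePreserving_neg (volume : Measure ℝ)).quasiMeasurePreserving.ae
    (ae_tendsto_truncHilbert hf)] with t ht
  exact (ht.neg.congr fun ε => (truncHilbert_comp_neg f t ε).symm).limUnder_eq

end HilbertTransform

lemma ae_im_eq_neg_hilbertTransform {f : ℝ → ℝ} (hf : Integrable f) {w : ℝ → ℂ}
    (hw : HasBoundaryValues (fun z => 1 + halfPlaneCauchy f z) w) :
    ∀ᵐ t, (w t).im = -hilbertTransform f t := by
  filter_upwards [ae_tendsto_truncHilbert_neg_im hf hw] with t ht
  rw [hilbertTransform, ht.limUnder_eq, neg_neg]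

lemma aestronglyMeasurable_hilbertTransform {f : ℝ → ℝ} (hf : Integrable f) (hf0 : 0 ≤ f) :
    AEStronglyMeasurable (hilbertTransform f) := by
  obtain ⟨w, hw, -⟩ := exists_hasBoundaryValues_one_add_halfPlaneCauchy hf hf0
  have hw_meas := hw.aestronglyMeasurable ((differentiableOn_halfPlaneCauchy hf).const_add 1)
  have him : AEStronglyMeasurable (fun t => (w t).im) :=
    (Complex.continuous_im.comp_aestronglyMeasurable hw_meas).mono_ac
      (absolutelyContinuous_cauchyMeasure 0 one_ne_zero)
  refine him.neg.congr ?_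
  filter_upwards [ae_im_eq_neg_hilbertTransform hf hw] with t ht
  rw [Pi.neg_apply, ht, neg_neg]

/-! ### Densities on one side of the origin -/

section OneSided

variable {f : ℝ → ℝ} (hsupp : ∀ x, x ∉ Ioo 0 1 → f x = 0)

include hsupp

lemma exists_pos_eq_zero_of_notMem_Icc {t : ℝ} (ht : t ∉ Icc (0 : ℝ) 1) :
    ∃ δ > 0, ∀ x, |x - t| < δ → f x = 0 := by
  obtain ⟨δ, hδ, hball⟩ := Metric.isOpen_iff.1 isClosed_Icc.isOpen_compl t ht
  refine ⟨δ, hδ, fun x hx => hsupp x fun hx01 => ?_⟩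
  exact hball (by rwa [Metric.mem_ball, Real.dist_eq]) (Ioo_subset_Icc_self hx01)

lemma hilbertTransform_eq_integral_of_notMem_Icc {t : ℝ} (ht : t ∉ Icc (0 : ℝ) 1) :
    hilbertTransform f t = π⁻¹ * ∫ x, (x - t)⁻¹ * f x := by
  obtain ⟨δ, hδ, hf⟩ := exists_pos_eq_zero_of_notMem_Icc hsupp ht
  exact hilbertTransform_eq_integral_of_eq_zero hδ hf

lemma abs_hilbertTransform_le (hf : Integrable f) {t : ℝ} (ht : t ≤ -1) :
    |hilbertTransform f t| ≤ π⁻¹ * ∫ x, |f x| := by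
  rw [hilbertTransform_eq_integral_of_notMem_Icc hsupp fun h => by linarith [h.1], abs_mul,
    abs_of_pos (inv_pos.2 Real.pi_pos)]
  gcongr
  refine norm_integral_le_of_norm_le (f := fun x => (x - t)⁻¹ * f x) hf.abs
    (ae_of_all _ fun x => ?_)
  by_cases hx : x ∈ Ioo (0 : ℝ) 1
  · rw [norm_mul, norm_inv, Real.norm_eq_abs, Real.norm_eq_abs]
    refine mul_le_of_le_one_left (abs_nonneg _) (inv_le_one_of_one_le₀ ?_)
    exact (by linarith [hx.1] : 1 ≤ x - t).trans (le_abs_self _)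
  · simp only [hsupp x hx, mul_zero, norm_zero, abs_zero, le_refl]

variable (hf0 : 0 ≤ f)

include hf0

lemma hilbertTransform_nonpos {t : ℝ} (ht : 1 < t) : hilbertTransform f t ≤ 0 := by
  rw [hilbertTransform_eq_integral_of_notMem_Icc hsupp fun h => by linarith [h.2]]
  refine mul_nonpos_of_nonneg_of_nonpos (by positivity) (integral_nonpos fun x => ?_)
  by_cases hx : x ∈ Ioo (0 : ℝ) 1
  · exact mul_nonpos_of_nonpos_of_nonneg (inv_nonpos.2 (by linarith [hx.2])) (hf0 x)
  · simp only [hsupp x hx, mul_zero, Pi.zero_apply, le_refl]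

variable (hf : Integrable f)

include hf

lemma le_hilbertTransform {t : ℝ} (ht : t ∈ Ioo (-1 : ℝ) 0) :
    (2 * π)⁻¹ * ∫ x, f x ≤ hilbertTransform f t := by
  have htIcc : t ∉ Icc (0 : ℝ) 1 := fun h => by linarith [h.1, ht.2]
  obtain ⟨δ, hδ, hfδ⟩ := exists_pos_eq_zero_of_notMem_Icc hsupp htIcc
  have hint : Integrable fun x => (x - t)⁻¹ * f x :=
    (integrableOn_inv_sub_smul hf t hδ).integrable_of_forall_notMem_eq_zero fun x hx => by
      rw [hfδ x (not_le.1 hx), smul_zero]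
  rw [hilbertTransform_eq_integral_of_notMem_Icc hsupp htIcc, mul_inv_rev, mul_assoc,
    ← integral_const_mul]
  gcongr
  · exact hf.const_mul _
  intro x
  by_cases hx : x ∈ Ioo (0 : ℝ) 1
  · exact mul_le_mul_of_nonneg_right
      ((inv_le_inv₀ two_pos (by linarith [hx.1, ht.2])).2 (by linarith [hx.2, ht.1])) (hf0 x)
  · simp only [hsupp x hx, mul_zero, le_refl]

variable (hT : IntegrableOn (hilbertTransform f) (Ioo (-1) 1))

include hT

lemma integral_le_integral_abs_hilbertTransform :
    ∫ x, f x ≤ 2 * π * ∫ t in Ioo (-1) 1, |hilbertTransform f t| := by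
  have hsub : Ioo (-1 : ℝ) 0 ⊆ Ioo (-1) 1 := Ioo_subset_Ioo_right zero_le_one
  have hle : (2 * π)⁻¹ * ∫ x, f x ≤ ∫ t in Ioo (-1) 1, |hilbertTransform f t| :=
    calc (2 * π)⁻¹ * ∫ x, f x = ∫ _ in Ioo (-1 : ℝ) 0, (2 * π)⁻¹ * ∫ x, f x := by simp
      _ ≤ ∫ t in Ioo (-1) 0, |hilbertTransform f t| :=
        setIntegral_mono_on (integrable_const _) (hT.mono_set hsub).abs measurableSet_Ioo
          fun t ht => (le_hilbertTransform hsupp hf0 hf ht).trans (le_abs_self _)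
      _ ≤ ∫ t in Ioo (-1) 1, |hilbertTransform f t| :=
        setIntegral_mono_set hT.abs (ae_of_all _ fun _ => abs_nonneg _) hsub.eventuallyLE
  rwa [inv_mul_le_iff₀ (by positivity)] at hle

lemma abs_hilbertTransform_le_integral_abs {t : ℝ} (ht : t ≤ -1) :
    |hilbertTransform f t| ≤ 2 * ∫ t in Ioo (-1) 1, |hilbertTransform f t| := by
  have hbound := abs_hilbertTransform_le hsupp hf ht
  simp only [abs_of_nonneg (hf0 _)] at hbound
  refine hbound.trans ?_
  rw [inv_mul_le_iff₀ Real.pi_pos, ← mul_assoc, mul_comm π]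
  exact integral_le_integral_abs_hilbertTransform hsupp hf0 hf hT

lemma integral_Iic_abs_hilbertTransform_le :
    IntegrableOn (hilbertTransform f) (Iic 1) ω ∧
      ∫ t in Iic 1, |hilbertTransform f t| ∂ω
        ≤ 3 * ∫ t in Ioo (-1) 1, |hilbertTransform f t| := by
  have hle := fun t ht => abs_hilbertTransform_le_integral_abs hsupp hf0 hf hT (t := t) ht
  have hmeas : AEStronglyMeasurable (hilbertTransform f) ω :=
    (aestronglyMeasurable_hilbertTransform hf hf0).mono_ac
      (cauchyMeasure_absolutelyContinuous _ one_ne_zero)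
  have hleft : IntegrableOn (fun t => |hilbertTransform f t|) (Iic (-1)) ω :=
    Measure.integrableOn_of_bounded (measure_ne_top _ _) hmeas.norm
      ((ae_restrict_mem measurableSet_Iic).mono fun t ht => (abs_abs _).trans_le (hle t ht))
  have hT' : IntegrableOn (hilbertTransform f) (Ioc (-1) 1) := by
    rwa [integrableOn_Ioc_iff_integrableOn_Ioo]
  have hright : IntegrableOn (fun t => |hilbertTransform f t|) (Ioc (-1) 1) ω :=
    hT'.abs.mono_measure (Measure.restrict_mono le_rfl standardCauchy_le_volume)
  have hunion : Iic (1 : ℝ) = Iic (-1) ∪ Ioc (-1) 1 := (Iic_union_Ioc_eq_Iic (by norm_num)).symm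
  rw [hunion, setIntegral_union (Iic_disjoint_Ioc le_rfl) measurableSet_Ioc hleft hright]
  refine ⟨(integrable_norm_iff hmeas.restrict).1 (hleft.union hright), ?_⟩
  have hleft_le : ∫ t in Iic (-1), |hilbertTransform f t| ∂ω
      ≤ 2 * ∫ t in Ioo (-1) 1, |hilbertTransform f t| :=
    calc ∫ t in Iic (-1), |hilbertTransform f t| ∂ω
        ≤ (ω).real (Iic (-1)) * (2 * ∫ t in Ioo (-1) 1, |hilbertTransform f t|) := by
          rw [← smul_eq_mul, ← setIntegral_const]
          exact setIntegral_mono_on hleft (integrable_const _) measurableSet_Iic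
            fun t ht => hle t ht
      _ ≤ 2 * ∫ t in Ioo (-1) 1, |hilbertTransform f t| :=
        mul_le_of_le_one_left (by positivity) measureReal_le_one
  have hright_le : ∫ t in Ioc (-1) 1, |hilbertTransform f t| ∂ω
      ≤ ∫ t in Ioo (-1) 1, |hilbertTransform f t| := by
    rw [← integral_Ioc_eq_integral_Ioo]
    exact integral_mono_measure (Measure.restrict_mono le_rfl standardCauchy_le_volume)
      (ae_of_all _ fun _ => abs_nonneg _) hT'.abs
  linarith

/-- To the right of the support, the boundary function of `1 + halfPlaneCauchy f` has imaginary part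
of constant sign, so the mean value property controls that part by the rest of the line. -/
lemma integral_abs_im_boundary_le {w : ℝ → ℂ}
    (hw : HasBoundaryValues (fun z => 1 + halfPlaneCauchy f z) w) :
    Integrable (fun t => (w t).im) ω ∧ ∫ t, |(w t).im| ∂ω
      ≤ ‖1 + halfPlaneCauchy f I‖ + 6 * ∫ t in Ioo (-1) 1, |hilbertTransform f t| := by
  have him : ∀ᵐ t ∂ω, (w t).im = -hilbertTransform f t :=
    ae_standardCauchy_iff.2 (ae_im_eq_neg_hilbertTransform hf hw)
  obtain ⟨hint, hle⟩ := integral_Iic_abs_hilbertTransform_le hsupp hf0 hf hT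
  have hpos : ∀ᵐ t ∂ω, t ∉ Iic 1 → 0 ≤ (w t).im := by
    filter_upwards [him] with t ht ht1
    rw [ht, neg_nonneg]
    exact hilbertTransform_nonpos hsupp hf0 (not_le.1 ht1)
  have him_int : IntegrableOn (fun t => (w t).im) (Iic 1) ω :=
    hint.neg.congr (ae_restrict_of_ae (him.mono fun t ht => ht.symm))
  have him_eq : ∫ t in Iic 1, |(w t).im| ∂ω = ∫ t in Iic 1, |hilbertTransform f t| ∂ω :=
    integral_congr_ae (ae_restrict_of_ae (him.mono fun t ht => by simp only [ht, abs_neg]))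
  obtain ⟨hw_int, hw_le⟩ := hw.integral_abs_im_le
    ((differentiableOn_halfPlaneCauchy hf).const_add 1)
    (one_le_re_one_add_halfPlaneCauchy hf hf0) measurableSet_Iic hpos him_int
  exact ⟨hw_int, by linarith⟩

lemma norm_one_add_halfPlaneCauchy_I_le :
    ‖1 + halfPlaneCauchy f I‖ ≤ 1 + 2 * ∫ t in Ioo (-1) 1, |hilbertTransform f t| := by
  have hnorm := norm_halfPlaneCauchy_le hf one_pos (z := I) (by rw [Complex.I_im])
  have hmass := integral_le_integral_abs_hilbertTransform hsupp hf0 hf hT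
  simp only [abs_of_nonneg (hf0 _), div_one] at hnorm
  refine norm_add_le_of_le norm_one.le (hnorm.trans ?_)
  rwa [inv_mul_le_iff₀ Real.pi_pos, ← mul_assoc, mul_comm π]

end OneSided

lemma zygmundFun_le_re_mul_log_norm {t : ℝ} (ht : 0 ≤ t) {z : ℂ} (hz : z.re = 1 + t) :
    zygmundFun t ≤ z.re * Real.log ‖z‖ := by
  rw [zygmundFun, ← hz]
  have hre : 0 < z.re := by rw [hz]; positivity
  gcongr
  exact Complex.re_le_norm z

lemma integral_zygmundFun_le_of_Ioo_zero_one {f : ℝ → ℝ}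
    (hsupp : ∀ x, x ∉ Ioo 0 1 → f x = 0) (hf0 : 0 ≤ f) (hf : Integrable f)
    (hT : IntegrableOn (hilbertTransform f) (Ioo (-1) 1)) {K : ℝ}
    (hK : ∫ t in Ioo (-1) 1, |hilbertTransform f t| ≤ K) :
    IntegrableOn (fun x => zygmundFun (f x)) (Ioo (-1) 1) ∧
      ∫ x in Ioo (-1) 1, zygmundFun (f x)
        ≤ 2 * π * ((1 + 2 * K) * (Real.log (1 + 2 * K) + π) + π * (1 + 8 * K)) := by
  obtain ⟨w, hw, hw_re⟩ := exists_hasBoundaryValues_one_add_halfPlaneCauchy hf hf0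
  obtain ⟨him, him_le⟩ := integral_abs_im_boundary_le hsupp hf0 hf hT hw
  obtain ⟨hlog, hlog_le⟩ := hw.integral_re_mul_log_norm_le
    ((differentiableOn_halfPlaneCauchy hf).const_add 1)
    (one_le_re_one_add_halfPlaneCauchy hf hf0) him
  have hnorm := norm_one_add_halfPlaneCauchy_I_le hsupp hf0 hf hT
  have hone : 1 ≤ ‖1 + halfPlaneCauchy f I‖ :=
    (one_le_re_one_add_halfPlaneCauchy hf hf0 I (by simp [upperHalfPlaneSet])).trans
      (Complex.re_le_norm _)
  have hF_le : ∀ᵐ x ∂ω, zygmundFun (f x) ≤ (w x).re * Real.log ‖w x‖ :=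
    ae_standardCauchy_iff.2 (hw_re.mono fun x hx => zygmundFun_le_re_mul_log_norm (hf0 x) hx)
  have hF0 : ∀ x, 0 ≤ zygmundFun (f x) := fun x => zygmundFun_nonneg (hf0 x)
  have hF_meas : AEStronglyMeasurable (fun x => zygmundFun (f x)) ω :=
    (measurable_zygmundFun.comp_aemeasurable hf.aemeasurable).aestronglyMeasurable.mono_ac
      (cauchyMeasure_absolutelyContinuous _ one_ne_zero)
  have hF : Integrable (fun x => zygmundFun (f x)) ω :=
    hlog.mono' hF_meas (hF_le.mono fun x hx => by rwa [Real.norm_of_nonneg (hF0 x)])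
  refine ⟨integrableOn_Ioo_of_integrable_standardCauchy hF, ?_⟩
  refine (setIntegral_Ioo_le_integral_standardCauchy hF (ae_of_all _ hF0)).trans ?_
  gcongr
  refine (integral_mono_ae hF hlog hF_le).trans (hlog_le.trans ?_)
  have hlog0 : 0 ≤ Real.log ‖1 + halfPlaneCauchy f I‖ := Real.log_nonneg hone
  gcongr <;> linarith

lemma measurePreserving_neg_restrict_Ioo :
    MeasurePreserving (fun x : ℝ => -x) (volume.restrict (Ioo (-1) 1))
      (volume.restrict (Ioo (-1) 1)) := by
  have h := (Measure.measurePreserving_neg (volume : Measure ℝ)).restrict_preimage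
    (measurableSet_Ioo (a := -1) (b := 1))
  rwa [neg_preimage, neg_Ioo, neg_neg] at h

/-- The two halves of `(-1, 1)`: a nonnegative density living on one of them has no cancellation in
its Hilbert transform on the other. -/
def IsHalfInterval (s : Set ℝ) : Prop := s = Ioo (-1) 0 ∨ s = Ioo 0 1

lemma IsHalfInterval.measurableSet {s : Set ℝ} (hs : IsHalfInterval s) : MeasurableSet s := by
  rcases hs with rfl | rfl <;> exact measurableSet_Ioo

lemma IsHalfInterval.subset_Ioo {s : Set ℝ} (hs : IsHalfInterval s) : s ⊆ Ioo (-1) 1 := by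
  rcases hs with rfl | rfl
  exacts [Ioo_subset_Ioo_right zero_le_one, Ioo_subset_Ioo_left (by norm_num)]

/-- A converse to Zygmund's theorem, in the spirit of Stein's converse for the maximal function. -/
theorem exists_integral_zygmundFun_le (K : ℝ) : ∃ B, ∀ s, IsHalfInterval s →
    ∀ f : ℝ → ℝ, 0 ≤ f → Integrable f → (∀ x, x ∉ s → f x = 0) →
    IntegrableOn (hilbertTransform f) (Ioo (-1) 1) →
    ∫ t in Ioo (-1) 1, |hilbertTransform f t| ≤ K →
    IntegrableOn (fun x => zygmundFun (f x)) (Ioo (-1) 1) ∧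
      ∫ x in Ioo (-1) 1, zygmundFun (f x) ≤ B := by
  refine ⟨2 * π * ((1 + 2 * K) * (Real.log (1 + 2 * K) + π) + π * (1 + 8 * K)),
    fun s hs f hf0 hf hsupp hT hK => ?_⟩
  obtain rfl | rfl := hs
  · have hrefl := measurePreserving_neg_restrict_Ioo
    have hemb : MeasurableEmbedding fun x : ℝ => -x := (MeasurableEquiv.neg ℝ).measurableEmbedding
    have hneg_eq : hilbertTransform (fun x => f (-x)) =ᵐ[volume.restrict (Ioo (-1) 1)]
        fun t => -hilbertTransform f (-t) := ae_restrict_of_ae (hilbertTransform_comp_neg_ae hf)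
    have hneg_le : ∫ t in Ioo (-1) 1, |hilbertTransform (fun x => f (-x)) t| ≤ K := by
      refine (integral_congr_ae (hneg_eq.fun_comp abs)).trans_le ?_
      simp only [Function.comp_apply, abs_neg]
      rwa [hrefl.integral_comp hemb fun t => |hilbertTransform f t|]
    obtain ⟨hint, hle⟩ := integral_zygmundFun_le_of_Ioo_zero_one (f := fun x => f (-x))
      (fun x hx => hsupp _ fun h => hx ⟨by linarith [h.2], by linarith [h.1]⟩)
      (fun x => hf0 (-x)) hf.comp_neg
      (((hrefl.integrable_comp_emb hemb).2 hT).neg.congr hneg_eq.symm) hneg_le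
    exact ⟨(hrefl.integrable_comp_emb hemb).1 hint,
      (hrefl.integral_comp hemb fun x => zygmundFun (f x)).symm.trans_le hle⟩
  · exact integral_zygmundFun_le_of_Ioo_zero_one hsupp hf0 hf hT hK

/-! ### The Zygmund class -/

section ZygmundFun

variable {s t : ℝ}

lemma zygmundFun_zero : zygmundFun 0 = 0 := by rw [zygmundFun, add_zero, Real.log_one, mul_zero]

lemma zygmundFun_le_zygmundFun (hs : 0 ≤ s) (hst : s ≤ t) : zygmundFun s ≤ zygmundFun t := by
  have : 0 ≤ Real.log (1 + s) := Real.log_nonneg (by linarith)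
  unfold zygmundFun
  gcongr
  linarith

lemma le_zygmundFun (ht : 0 ≤ t) : t ≤ zygmundFun t := by
  have hpos : 0 < 1 + t := by positivity
  calc t = (1 + t) * (1 - (1 + t)⁻¹) := by field_simp; ring
    _ ≤ zygmundFun t := by
      unfold zygmundFun
      gcongr
      exact Real.one_sub_inv_le_log_of_pos hpos

lemma zygmundFun_two_mul_le (ht : 0 ≤ t) : zygmundFun (2 * t) ≤ 4 * zygmundFun t := by
  have hlog : Real.log (1 + 2 * t) ≤ 2 * Real.log (1 + t) := by
    rw [← Real.log_rpow (by positivity), Real.rpow_two]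
    exact Real.log_le_log (by positivity) (by nlinarith)
  calc zygmundFun (2 * t) ≤ (2 * (1 + t)) * (2 * Real.log (1 + t)) :=
        mul_le_mul (by linarith) hlog (Real.log_nonneg (by linarith)) (by positivity)
    _ = 4 * zygmundFun t := by rw [zygmundFun]; ring

lemma zygmundFun_add_le (hs : 0 ≤ s) (ht : 0 ≤ t) :
    zygmundFun (s + t) ≤ 4 * (zygmundFun s + zygmundFun t) := by
  wlog hst : s ≤ t generalizing s t
  · rw [add_comm s, add_comm (zygmundFun s)]
    exact this ht hs (le_of_not_ge hst)
  calc zygmundFun (s + t) ≤ zygmundFun (2 * t) :=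
        zygmundFun_le_zygmundFun (by positivity) (by linarith)
    _ ≤ 4 * zygmundFun t := zygmundFun_two_mul_le ht
    _ ≤ 4 * (zygmundFun s + zygmundFun t) := by linarith [zygmundFun_nonneg hs]

lemma zygmundFun_abs_le (t : ℝ) :
    zygmundFun |t| ≤ zygmundFun (max t 0) + zygmundFun (max (-t) 0) := by
  rcases le_total 0 t with ht | ht
  · rw [abs_of_nonneg ht, max_eq_left ht]
    exact le_add_of_nonneg_right (zygmundFun_nonneg (le_max_right _ _))
  · rw [abs_of_nonpos ht, max_eq_left (neg_nonneg.2 ht)]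
    exact le_add_of_nonneg_left (zygmundFun_nonneg (le_max_right _ _))

lemma mul_posLog_le_zygmundFun (ht : 0 ≤ t) : t * max (Real.log t) 0 ≤ zygmundFun t := by
  refine mul_le_mul (by linarith) (max_le ?_ (Real.log_nonneg (by linarith))) (by positivity)
    (by positivity)
  rcases ht.eq_or_lt with rfl | hpos
  · simp only [Real.log_zero, add_zero, Real.log_one, le_refl]
  · exact Real.log_le_log hpos (by linarith)

lemma zygmundFun_le_add_mul_posLog (ht : 0 ≤ t) :
    zygmundFun t ≤ 6 + 4 * (t * max (Real.log t) 0) := by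
  rcases le_total t 2 with ht2 | ht2
  · have h2 : zygmundFun 2 ≤ 6 := by
      have := Real.log_le_sub_one_of_pos (by norm_num : (0 : ℝ) < 1 + 2)
      rw [zygmundFun]
      linarith
    have : 0 ≤ t * max (Real.log t) 0 := by positivity
    linarith [zygmundFun_le_zygmundFun ht ht2]
  · have hlog : Real.log (1 + t) ≤ 2 * Real.log t := by
      rw [← Real.log_rpow (by positivity), Real.rpow_two]
      exact Real.log_le_log (by positivity) (by nlinarith)
    have hmul : zygmundFun t ≤ (2 * t) * (2 * Real.log t) :=
      mul_le_mul (by linarith) hlog (Real.log_nonneg (by linarith)) (by positivity)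
    have := mul_le_mul_of_nonneg_left (le_max_left (Real.log t) 0) ht
    linarith

end ZygmundFun

lemma zygmundFun_norm_le (z : ℂ) :
    zygmundFun ‖z‖ ≤ 4 * ((zygmundFun (max z.re 0) + zygmundFun (max (-z.re) 0))
      + (zygmundFun (max z.im 0) + zygmundFun (max (-z.im) 0))) :=
  calc zygmundFun ‖z‖ ≤ zygmundFun (|z.re| + |z.im|) :=
        zygmundFun_le_zygmundFun (norm_nonneg _) (Complex.norm_le_abs_re_add_abs_im z)
    _ ≤ 4 * (zygmundFun |z.re| + zygmundFun |z.im|) :=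
        zygmundFun_add_le (abs_nonneg _) (abs_nonneg _)
    _ ≤ _ := by gcongr <;> exact zygmundFun_abs_le _

section MemLlogL

variable {f g : ℝ → ℂ}

lemma memLlogL_iff : MemLlogL f ↔ AEStronglyMeasurable f μI ∧
    IntegrableOn (fun x => zygmundFun ‖f x‖) (Ioo (-1) 1) := by
  refine and_congr_right fun hf => ⟨fun h => ?_, fun h => ?_⟩
  · refine ((integrableOn_const (C := (6 : ℝ)) (by simp)).add (h.const_mul 4)).mono'
      (measurable_zygmundFun.comp_aemeasurable hf.norm.aemeasurable).aestronglyMeasurable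
      (ae_of_all _ fun x => ?_)
    rw [Real.norm_of_nonneg (zygmundFun_nonneg (norm_nonneg _))]
    exact zygmundFun_le_add_mul_posLog (norm_nonneg _)
  · refine h.mono' ((by fun_prop : Measurable fun t : ℝ => t * max (Real.log t) 0).comp_aemeasurable
      hf.norm.aemeasurable).aestronglyMeasurable (ae_of_all _ fun x => ?_)
    rw [Real.norm_of_nonneg (by positivity)]
    exact mul_posLog_le_zygmundFun (norm_nonneg _)

lemma MemLlogL.integrableOn (hf : MemLlogL f) : IntegrableOn f (Ioo (-1) 1) :=
  (memLlogL_iff.1 hf).2.mono' hf.1 (ae_of_all _ fun _ => le_zygmundFun (norm_nonneg _))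

lemma MemLlogL.mono (hf : MemLlogL f) (hg : AEStronglyMeasurable g μI)
    (hle : ∀ᵐ x ∂μI, ‖g x‖ ≤ ‖f x‖) : MemLlogL g := by
  refine memLlogL_iff.2 ⟨hg, (memLlogL_iff.1 hf).2.mono'
    (measurable_zygmundFun.comp_aemeasurable hg.norm.aemeasurable).aestronglyMeasurable
    (hle.mono fun x hx => ?_)⟩
  rw [Real.norm_of_nonneg (zygmundFun_nonneg (norm_nonneg _))]
  exact zygmundFun_le_zygmundFun (norm_nonneg _) hx

lemma memLlogL_const (c : ℂ) : MemLlogL fun _ => c :=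
  ⟨aestronglyMeasurable_const, integrableOn_const (by simp)⟩

end MemLlogL

section ComponentPart

variable {L : ℂ →L[ℝ] ℝ} {s : Set ℝ} {f : ℝ → ℂ}

/-- The positive part of the component `L f` of `f`, restricted to the set `s`. -/
def componentPart (L : ℂ →L[ℝ] ℝ) (s : Set ℝ) (f : ℝ → ℂ) : ℝ → ℝ :=
  s.indicator fun x => max (L (f x)) 0

lemma componentPart_nonneg : 0 ≤ componentPart L s f := fun _ =>
  indicator_nonneg (fun _ _ => le_max_right _ _) _

lemma componentPart_of_notMem {x : ℝ} (hx : x ∉ s) : componentPart L s f x = 0 :=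
  indicator_of_notMem hx _

lemma componentPart_le_norm (hL : ‖L‖ ≤ 1) (x : ℝ) : componentPart L s f x ≤ ‖f x‖ := by
  refine indicator_apply_le' (fun _ => max_le ?_ (norm_nonneg _)) fun _ => norm_nonneg _
  exact (le_abs_self _).trans (L.le_of_opNorm_le_of_le hL le_rfl |>.trans_eq (one_mul _))

lemma aestronglyMeasurable_componentPart (hf : AEStronglyMeasurable f μI) (hs : MeasurableSet s)
    (hsub : s ⊆ Ioo (-1) 1) : AEStronglyMeasurable (componentPart L s f) :=
  (aestronglyMeasurable_indicator_iff hs).2 <|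
    ((L.continuous.comp_aestronglyMeasurable hf).sup aestronglyMeasurable_const).mono_measure
      (Measure.restrict_mono hsub le_rfl)

lemma memLlogL_of_componentPart (hf : AEStronglyMeasurable f μI)
    (h : ∀ L : ℂ →L[ℝ] ℝ, ‖L‖ ≤ 1 → ∀ s, IsHalfInterval s →
      IntegrableOn (fun x => zygmundFun (componentPart L s f x)) (Ioo (-1) 1)) : MemLlogL f := by
  have hcomp : ∀ L : ℂ →L[ℝ] ℝ, ‖L‖ ≤ 1 →
      IntegrableOn (fun x => zygmundFun (max (L (f x)) 0)) (Ioo (-1) 1) := fun L hL => by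
    have hhalf : ∀ s, IsHalfInterval s →
        IntegrableOn (fun x => zygmundFun (max (L (f x)) 0)) s := fun s hs => by
      refine ((h L hL s hs).mono_set hs.subset_Ioo).congr_fun (fun x hx => ?_) hs.measurableSet
      simp only [componentPart, indicator_of_mem hx]
    rw [← Ioo_union_Ico_eq_Ioo (by norm_num : (-1 : ℝ) < 0) zero_le_one]
    exact (hhalf _ (.inl rfl)).union (by
      rw [integrableOn_Ico_iff_integrableOn_Ioo]
      exact hhalf _ (.inr rfl))
  have hre := hcomp Complex.reCLM Complex.reCLM_norm.le
  have hre' := hcomp (-Complex.reCLM) (by rw [norm_neg, Complex.reCLM_norm])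
  have him := hcomp Complex.imCLM Complex.imCLM_norm.le
  have him' := hcomp (-Complex.imCLM) (by rw [norm_neg, Complex.imCLM_norm])
  refine memLlogL_iff.2 ⟨hf, (((hre.add hre').add (him.add him')).const_mul 4).mono'
    (measurable_zygmundFun.comp_aemeasurable hf.norm.aemeasurable).aestronglyMeasurable
    (ae_of_all _ fun x => ?_)⟩
  rw [Real.norm_of_nonneg (zygmundFun_nonneg (norm_nonneg _))]
  exact zygmundFun_norm_le (f x)

end ComponentPart

/-! ### The finite Hilbert transform on the Zygmund class -/

lemma hilbertTransform_congr_ae {E : Type*} [NormedAddCommGroup E] [NormedSpace ℝ E]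
    {f g : ℝ → E} (h : f =ᵐ[volume] g) : hilbertTransform f = hilbertTransform g := by
  have htrunc : truncHilbert f = truncHilbert g := by
    ext t ε
    exact congrArg (π⁻¹ • ·) <| integral_congr_ae <|
      ae_restrict_of_ae (h.mono fun x hx => by simp only [hx])
  ext t
  rw [hilbertTransform, hilbertTransform, htrunc]

lemma FHT_eq_hilbertTransform (f : ℝ → ℂ) :
    FHT f = hilbertTransform ((Ioo (-1) 1).indicator f) := by
  ext t
  refine congrArg (limUnder (𝓝[>] 0)) (funext fun ε => ?_)
  have hset : {x | x ∈ Ioo (-1 : ℝ) 1 ∧ ε ≤ |x - t|} = {x | ε ≤ |x - t|} ∩ Ioo (-1) 1 :=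
    inter_comm _ _
  rw [truncHilbert, hset, ← setIntegral_indicator measurableSet_Ioo, Complex.real_smul,
    Complex.ofReal_inv]
  congr 2 with x
  by_cases hx : x ∈ Ioo (-1 : ℝ) 1
  · rw [indicator_of_mem hx, indicator_of_mem hx, Complex.real_smul, Complex.ofReal_inv,
      Complex.ofReal_sub, div_eq_inv_mul]
  · rw [indicator_of_notMem hx, indicator_of_notMem hx, smul_zero]

lemma integrableOn_hilbertTransform_of_nonneg {f : ℝ → ℝ} (hf : Integrable f) (hf0 : 0 ≤ f)
    (hF : Integrable fun x => zygmundFun (f x)) :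
    IntegrableOn (hilbertTransform f) (Ioo (-1) 1) := by
  obtain ⟨w, hw, -⟩ := exists_hasBoundaryValues_one_add_halfPlaneCauchy hf hf0
  have him := integrableOn_Ioo_of_integrable_standardCauchy
    (integrable_im_boundary_of_integrable_zygmundFun hf hf0 hF hw)
  refine him.neg.congr (ae_restrict_of_ae ?_)
  filter_upwards [ae_im_eq_neg_hilbertTransform hf hw] with t ht
  rw [Pi.neg_apply, ht, neg_neg]

lemma integrableOn_hilbertTransform_real {f : ℝ → ℝ} (hf : Integrable f)
    (hF : Integrable fun x => zygmundFun |f x|) :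
    IntegrableOn (hilbertTransform f) (Ioo (-1) 1) := by
  have hpart : ∀ g : ℝ → ℝ, Integrable g → 0 ≤ g → (∀ x, g x ≤ |f x|) →
      IntegrableOn (hilbertTransform g) (Ioo (-1) 1) := fun g hg hg0 hle => by
    refine integrableOn_hilbertTransform_of_nonneg hg hg0 (hF.mono'
      (measurable_zygmundFun.comp_aemeasurable hg.aemeasurable).aestronglyMeasurable
      (ae_of_all _ fun x => ?_))
    rw [Real.norm_of_nonneg (zygmundFun_nonneg (hg0 x))]
    exact zygmundFun_le_zygmundFun (hg0 x) (hle x)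
  have hpos := hpart _ hf.pos_part (fun _ => le_max_right _ _) fun x =>
    max_le (le_abs_self _) (abs_nonneg _)
  have hneg := hpart _ hf.neg_part (fun _ => le_max_right _ _) fun x =>
    max_le (neg_le_abs _) (abs_nonneg _)
  refine (hpos.sub hneg).congr (ae_restrict_of_ae ?_)
  filter_upwards [hilbertTransform_sub_ae hf.pos_part hf.neg_part] with t ht
  rw [Pi.sub_apply, ← ht]
  simp only [max_zero_sub_max_neg_zero_eq_self]

theorem MemLlogL.integrableOn_FHT {f : ℝ → ℂ} (hf : MemLlogL f) :
    IntegrableOn (FHT f) (Ioo (-1) 1) := by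
  rw [FHT_eq_hilbertTransform]
  set g := (Ioo (-1) 1).indicator f with hg
  have hg_int : Integrable g := (integrable_indicator_iff measurableSet_Ioo).2 hf.integrableOn
  have hF : Integrable fun x => zygmundFun ‖g x‖ := by
    refine ((integrable_indicator_iff measurableSet_Ioo).2 (memLlogL_iff.1 hf).2).congr
      (ae_of_all _ fun x => ?_)
    by_cases hx : x ∈ Ioo (-1 : ℝ) 1
    · simp only [hg, indicator_of_mem hx]
    · simp only [hg, indicator_of_notMem hx, norm_zero, zygmundFun_zero]
  have hcomp : ∀ L : ℂ →L[ℝ] ℝ, ‖L‖ ≤ 1 →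
      IntegrableOn (fun t => L (hilbertTransform g t)) (Ioo (-1) 1) := fun L hL => by
    have hLg := L.integrable_comp hg_int
    refine (integrableOn_hilbertTransform_real hLg (hF.mono'
      (measurable_zygmundFun.comp_aemeasurable
        hLg.norm.aemeasurable).aestronglyMeasurable (ae_of_all _ fun x => ?_))).congr
      (ae_restrict_of_ae (hilbertTransform_clm_comp_ae L hg_int))
    rw [Real.norm_of_nonneg (zygmundFun_nonneg (abs_nonneg _))]
    exact zygmundFun_le_zygmundFun (abs_nonneg _)
      ((L.le_of_opNorm_le_of_le hL le_rfl).trans_eq (one_mul _))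
  have hre := (hcomp Complex.reCLM Complex.reCLM_norm.le).ofReal (𝕜 := ℂ)
  have him := (hcomp Complex.imCLM Complex.imCLM_norm.le).ofReal (𝕜 := ℂ)
  exact (hre.add (him.mul_const I)).congr (ae_of_all _ fun t => Complex.re_add_im _)

/-! ### The optimal domain -/

lemma hilbertTransform_ae_eq_clm_FHT (L : ℂ →L[ℝ] ℝ) {f : ℝ → ℂ}
    (hf : IntegrableOn f (Ioo (-1) 1)) {g : ℝ → ℝ} (hg : ∀ x, x ∉ Ioo (-1) 1 → g x = 0)
    (hgf : ∀ᵐ x ∂μI, g x = L (f x)) :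
    hilbertTransform g =ᵐ[volume] fun t => L (FHT f t) := by
  have hf' : Integrable ((Ioo (-1) 1).indicator f) :=
    (integrable_indicator_iff measurableSet_Ioo).2 hf
  have hg_ae : g =ᵐ[volume] fun x => L ((Ioo (-1) 1).indicator f x) := by
    filter_upwards [ae_imp_of_ae_restrict hgf] with x hx
    by_cases hxI : x ∈ Ioo (-1 : ℝ) 1
    · rw [indicator_of_mem hxI, hx hxI]
    · rw [indicator_of_notMem hxI, hg x hxI, map_zero]
  rw [hilbertTransform_congr_ae hg_ae, FHT_eq_hilbertTransform]
  exact hilbertTransform_clm_comp_ae L hf'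

lemma exists_integral_zygmundFun_le_of_integral_norm_FHT_le (K : ℝ) :
    ∃ B, ∀ s, IsHalfInterval s → ∀ L : ℂ →L[ℝ] ℝ, ‖L‖ ≤ 1 → ∀ f : ℝ → ℂ, ∀ g : ℝ → ℝ, 0 ≤ g →
      (∀ x, x ∉ s → g x = 0) → (∀ᵐ x ∂μI, g x = L (f x)) → IntegrableOn f (Ioo (-1) 1) →
      IntegrableOn (FHT f) (Ioo (-1) 1) → ∫ t in Ioo (-1) 1, ‖FHT f t‖ ≤ K →
      IntegrableOn (fun x => zygmundFun (g x)) (Ioo (-1) 1) ∧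
        ∫ x in Ioo (-1) 1, zygmundFun (g x) ≤ B := by
  obtain ⟨B, hB⟩ := exists_integral_zygmundFun_le K
  refine ⟨B, fun s hs L hL f g hg0 hgs hgf hf hT hTK => ?_⟩
  have hgI : ∀ x, x ∉ Ioo (-1) 1 → g x = 0 := fun x hx => hgs x fun h => hx (hs.subset_Ioo h)
  have hg : Integrable g := by
    refine (integrableOn_iff_integrable_of_support_subset (s := Ioo (-1) 1) fun x hx => ?_).1
      (Integrable.congr (L.integrable_comp hf) (hgf.mono fun x hx => hx.symm))
    exact not_imp_comm.1 (hgI x) hx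
  have hT_ae := ae_restrict_of_ae (s := Ioo (-1) 1) (hilbertTransform_ae_eq_clm_FHT L hf hgI hgf)
  refine hB s hs g hg0 hg hgs ((L.integrable_comp hT).congr
    (hT_ae.mono fun t ht => ht.symm)) (le_trans ?_ hTK)
  refine integral_mono_of_nonneg (ae_of_all _ fun _ => abs_nonneg _) hT.norm ?_
  filter_upwards [hT_ae] with t ht
  rw [ht]
  exact (L.le_of_opNorm_le_of_le hL le_rfl).trans_eq (one_mul _)

lemma memLlogL_of_integrableOn_FHT_indicator {f : ℝ → ℂ} (hf : IntegrableOn f (Ioo (-1) 1))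
    (hT : ∀ A, MeasurableSet A → IntegrableOn (FHT (A.indicator f)) (Ioo (-1) 1)) :
    MemLlogL f := by
  refine memLlogL_of_componentPart hf.1 fun L hL s hs => ?_
  obtain ⟨f', hf', hff'⟩ := hf.1
  set A := s ∩ {x | 0 < L (f' x)}
  have hA_meas : MeasurableSet A := hs.measurableSet.inter
    (measurableSet_lt measurable_const (L.continuous.measurable.comp hf'.measurable))
  have hpart : ∀ᵐ x ∂μI, componentPart L s f x = L (A.indicator f x) := by
    filter_upwards [hff'] with x hx
    by_cases hxs : x ∈ s
    · rw [componentPart, indicator_of_mem hxs]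
      by_cases hLx : 0 < L (f' x)
      · rw [indicator_of_mem (show x ∈ A from ⟨hxs, hLx⟩), hx, max_eq_left hLx.le]
      · rw [indicator_of_notMem fun h => hLx h.2, hx, max_eq_right (not_lt.1 hLx), map_zero]
    · rw [componentPart_of_notMem hxs, indicator_of_notMem fun h => hxs h.1, map_zero]
  obtain ⟨B, hB⟩ := exists_integral_zygmundFun_le_of_integral_norm_FHT_le
    (∫ t in Ioo (-1) 1, ‖FHT (A.indicator f) t‖)
  exact (hB s hs L hL _ _ componentPart_nonneg (fun _ => componentPart_of_notMem) hpart
    (hf.indicator hA_meas) (hT A hA_meas) le_rfl).1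

section Truncation

variable {f : ℝ → ℂ} {L : ℂ →L[ℝ] ℝ} {s : Set ℝ}

lemma memLlogL_min_componentPart (hf : AEStronglyMeasurable f μI) (hs : IsHalfInterval s) (n : ℕ) :
    MemLlogL fun x => ((min (componentPart L s f x) n : ℝ) : ℂ) := by
  have hmeas := (aestronglyMeasurable_componentPart (L := L) hf hs.measurableSet
    hs.subset_Ioo).inf (aestronglyMeasurable_const (b := (n : ℝ)))
  refine (memLlogL_const (n : ℂ)).mono
    (Complex.continuous_ofReal.comp_aestronglyMeasurable hmeas.restrict) (ae_of_all _ fun x => ?_)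
  rw [Complex.norm_of_nonneg (le_min (componentPart_nonneg x) n.cast_nonneg), Complex.norm_natCast]
  exact min_le_right _ _

lemma norm_min_componentPart_le (hL : ‖L‖ ≤ 1) (n : ℕ) (x : ℝ) :
    ‖((min (componentPart L s f x) n : ℝ) : ℂ)‖ ≤ ‖f x‖ := by
  rw [Complex.norm_of_nonneg (le_min (componentPart_nonneg x) n.cast_nonneg)]
  exact (min_le_left _ _).trans (componentPart_le_norm hL x)

lemma integrableOn_zygmundFun_of_min_natCast {g : ℝ → ℝ} (hg : 0 ≤ g) {B : ℝ}
    (hB : ∀ n : ℕ, IntegrableOn (fun x => zygmundFun (min (g x) n)) (Ioo (-1) 1) ∧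
      ∫ x in Ioo (-1) 1, zygmundFun (min (g x) n) ≤ B) :
    IntegrableOn (fun x => zygmundFun (g x)) (Ioo (-1) 1) := by
  refine (integrable_of_tendsto_of_integral_norm_le (l := atTop)
    (f := fun (n : ℕ) x => zygmundFun (min (g x) n)) (C := B)
    (Eventually.of_forall fun n => (hB n).1) (Eventually.of_forall fun n => ?_)
    (ae_of_all _ fun x => ?_)).1
  · simp_rw [Real.norm_of_nonneg (zygmundFun_nonneg (le_min (hg _) n.cast_nonneg))]
    exact (hB n).2
  · refine tendsto_const_nhds.congr' ?_
    filter_upwards [eventually_ge_atTop ⌈g x⌉₊] with n hn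
    rw [min_eq_left (Nat.ceil_le.1 hn)]

end Truncation

theorem BanachFunctionSpace.memLlogL_of_mem (X : BanachFunctionSpace) (C : ℝ)
    (hX : ∀ f, X.Mem f → MemLlogL f → ∫ x in Ioo (-1) 1, ‖FHT f x‖ ≤ C * X.nrm f) {f : ℝ → ℂ}
    (hf : X.Mem f) : MemLlogL f := by
  have hf_meas := X.mem_meas f hf
  refine memLlogL_of_componentPart hf_meas fun L hL s hs => ?_
  obtain ⟨B, hB⟩ := exists_integral_zygmundFun_le_of_integral_norm_FHT_le (|C| * X.nrm f)
  refine integrableOn_zygmundFun_of_min_natCast componentPart_nonneg (B := B) fun n => ?_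
  have hlog := memLlogL_min_componentPart (L := L) hf_meas hs n
  obtain ⟨hmem, hnrm⟩ := X.ideal f _ hf hlog.1 (ae_of_all _ (norm_min_componentPart_le hL n))
  refine hB s hs Complex.reCLM Complex.reCLM_norm.le _ _
    (fun x => le_min (componentPart_nonneg x) n.cast_nonneg) (fun x hx => ?_)
    (ae_of_all _ fun x => (Complex.ofReal_re _).symm) hlog.integrableOn hlog.integrableOn_FHT ?_
  · rw [componentPart_of_notMem hx, min_eq_left n.cast_nonneg]
  · calc _ ≤ C * X.nrm _ := hX _ hmem hlog
      _ ≤ |C| * X.nrm f := mul_le_mul (le_abs_self C) hnrm (X.nrm_nonneg _) (abs_nonneg C)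

theorem optimal_domain_general :
    (∀ f : ℝ → ℂ, IntegrableOn f (Ioo (-1) 1) →
      (MemLlogL f ↔
        ∀ A : Set ℝ, MeasurableSet A → IntegrableOn (FHT (A.indicator f)) (Ioo (-1) 1))) ∧
    (∀ f : ℝ → ℂ,
      (IntegrableOn f (Ioo (-1) 1) ∧
        ∀ h : ℝ → ℂ, AEStronglyMeasurable h μI → (∀ᵐ x ∂μI, ‖h x‖ ≤ ‖f x‖) →
          IntegrableOn (FHT h) (Ioo (-1) 1))
      ↔ MemLlogL f) ∧
    ∀ (X : BanachFunctionSpace) (C : ℝ),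
      (∀ f, X.Mem f → MemLlogL f → ∫ x in Ioo (-1) 1, ‖FHT f x‖ ≤ C * X.nrm f) →
      ∀ f, X.Mem f → MemLlogL f := by
  have hind : ∀ (A : Set ℝ) (f : ℝ → ℂ), ∀ᵐ x ∂μI, ‖A.indicator f x‖ ≤ ‖f x‖ := fun A f =>
    ae_of_all _ fun x => norm_indicator_le_norm_self f x
  refine ⟨fun f hf => ⟨fun h A hA => ?_, memLlogL_of_integrableOn_FHT_indicator hf⟩,
    fun f => ⟨fun ⟨hf, hT⟩ => ?_, fun h => ⟨h.integrableOn, fun g hg hle => ?_⟩⟩,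
    fun X C hX f hf => X.memLlogL_of_mem C hX hf⟩
  · exact (h.mono (h.1.indicator hA) (hind A f)).integrableOn_FHT
  · exact memLlogL_of_integrableOn_FHT_indicator hf fun A hA =>
      hT _ (hf.1.indicator hA) (hind A f)
  · exact (h.mono hg hle).integrableOn_FHT

end

/-- `f ∈ L¹` is in `L log L(-1,1)` iff `T(fχ_A) ∈ L¹` for every Borel `A`; the optimal
domain `[T, L¹] = {f ∈ L¹ : T(h) ∈ L¹ whenever |h| ≤ |f|}` equals `L log L`; and `T` admits
no continuous linear `L¹`-valued extension to a strictly larger Banach function space. -/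
theorem optimal_domain :
    (∀ f : ℝ → ℂ, IntegrableOn f (Set.Ioo (-1 : ℝ) 1) →
      (MemLlogL f ↔
        ∀ A : Set ℝ, MeasurableSet A →
          IntegrableOn (FHT (A.indicator f)) (Set.Ioo (-1 : ℝ) 1))) ∧
    (∀ f : ℝ → ℂ,
      (IntegrableOn f (Set.Ioo (-1 : ℝ) 1) ∧
        ∀ h : ℝ → ℂ, AEStronglyMeasurable h μI → (∀ᵐ x ∂μI, ‖h x‖ ≤ ‖f x‖) →
          IntegrableOn (FHT h) (Set.Ioo (-1 : ℝ) 1))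
      ↔ MemLlogL f) ∧
    ¬ ∃ (X : BanachFunctionSpace) (S : (ℝ → ℂ) → ℝ → ℂ) (C : ℝ),
        (∀ f, MemLlogL f → X.Mem f) ∧
        (∃ f, X.Mem f ∧ ¬ MemLlogL f) ∧
        (∀ f, X.Mem f → IntegrableOn (S f) (Set.Ioo (-1 : ℝ) 1) ∧
          ∫ x in Set.Ioo (-1 : ℝ) 1, ‖S f x‖ ≤ C * X.nrm f) ∧
        (∀ f g, X.Mem f → X.Mem g →
          S (f + g) =ᵐ[μI] fun x => S f x + S g x) ∧
        (∀ (c : ℂ) (f : ℝ → ℂ), X.Mem f →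
          S (c • f) =ᵐ[μI] fun x => c * S f x) ∧
        (∀ f, MemLlogL f → S f =ᵐ[μI] FHT f) :=
  ⟨optimal_domain_general.1, optimal_domain_general.2.1,
    fun ⟨X, _, C, _, ⟨f, hf, hfL⟩, hS, _, _, hST⟩ =>
      hfL (optimal_domain_general.2.2 X C (fun g hg hgL =>
        (integral_congr_ae ((hST g hgL).symm.fun_comp norm)).trans_le (hS g hg).2) f hf)⟩
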